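/- arXiv:2405.12763 — 2 statements merged into one kernel-verified Lean document; each statement's English description precedes it below -/
import Mathlib

section
/- Let S be a non-negatively graded commutative Noetherian ring, generated as an algebra over S^0 by homogeneous elements x_1, …, x_t of positive degrees, and set d = lcm{deg(x_1), …, deg(x_t)}. Let M be a finitely generated non-negatively graded S-module such that each graded component M^n has finite length as an S^0-module. Then there exist polynomials g_1(y), …, g_d(y) with complex coefficients and an integer N such that for every n ≥ N, if n ≡ i (mod d) with 1 ≤ i ≤ d, then the length of M^n over S^0 equals g_i(n). -/
/-!
Induct on the number of generators that do not annihilate a homogeneous subquotient `Q / P` of `M`.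
If `x` of degree `e` is one of them, the kernel and cokernel of multiplication by `x` on `Q / P` are
killed by one generator more, and additivity of length expresses the step-`e` difference of the
Hilbert function of `Q / P` through theirs. That difference is thus quasi-polynomial, and since
`e ∣ d` the step can be enlarged to `d`, where a polynomial difference equation can be solved in
each residue class. A subquotient annihilated by all generators is finitely generated over the base
ring, so it vanishes in large degrees.

That `M` is Noetherian is itself forced by the lengths: finitely many components generate `M` over
`S`, they are Noetherian over the base ring, and Hilbert's basis theorem applies modulo their
annihilator.
-/

open Filter Polynomial DirectSum
open scoped fwdDiff

section QuasiPolynomial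

section CommRing

variable {K : Type*} [CommRing K] {d : ℕ} {f g : ℕ → K}

/-- A sequence is eventually quasi-polynomial of period `d` if, for large `n`, its value at `n` is
that of a polynomial depending only on the residue of `n` modulo `d`. Only the constituents `p r`
with `r < d` matter when `0 < d`; for `d = 0` every sequence qualifies, since `n % 0 = n`. -/
def IsEventuallyQuasiPolynomial (d : ℕ) (f : ℕ → K) : Prop :=
  ∃ p : ℕ → K[X], ∀ᶠ n in atTop, f n = (p (n % d)).eval (n : K)

namespace IsEventuallyQuasiPolynomial

theorem of_eventuallyEq_zero (hf : f =ᶠ[atTop] 0) : IsEventuallyQuasiPolynomial d f :=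
  ⟨0, by filter_upwards [hf] with n hn; simp [hn]⟩

theorem add (hf : IsEventuallyQuasiPolynomial d f) (hg : IsEventuallyQuasiPolynomial d g) :
    IsEventuallyQuasiPolynomial d (f + g) := by
  obtain ⟨p, hp⟩ := hf
  obtain ⟨q, hq⟩ := hg
  refine ⟨p + q, ?_⟩
  filter_upwards [hp, hq] with n hpn hqn
  simp [hpn, hqn]

theorem sub (hf : IsEventuallyQuasiPolynomial d f) (hg : IsEventuallyQuasiPolynomial d g) :
    IsEventuallyQuasiPolynomial d (f - g) := by
  obtain ⟨p, hp⟩ := hf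
  obtain ⟨q, hq⟩ := hg
  refine ⟨p - q, ?_⟩
  filter_upwards [hp, hq] with n hpn hqn
  simp [hpn, hqn]

theorem comp_add_right (hf : IsEventuallyQuasiPolynomial d f) (k : ℕ) :
    IsEventuallyQuasiPolynomial d (fun n => f (n + k)) := by
  obtain ⟨p, hp⟩ := hf
  refine ⟨fun r => (p ((r + k) % d)).comp (X + C (k : K)), ?_⟩
  filter_upwards [(tendsto_add_atTop_nat k).eventually hp] with n hn
  simp [hn, eval_comp]

theorem of_eventually_periodic (hd : 0 < d) (hf : ∀ᶠ n in atTop, f (n + d) = f n) :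
    IsEventuallyQuasiPolynomial d f := by
  obtain ⟨N, hN⟩ := eventually_atTop.1 hf
  have eq_base (r m : ℕ) (hm : N ≤ m) : f (r + d * m) = f (r + d * N) := by
    induction m, hm using Nat.le_induction with
    | base => rfl
    | succ m hm ih =>
      have hNm : N ≤ r + d * m := by nlinarith
      rw [Nat.mul_succ, ← add_assoc, hN _ hNm, ih]
  refine ⟨fun r => C (f (r + d * N)), eventually_atTop.2 ⟨N * d, fun n hn => ?_⟩⟩
  rw [eval_C, ← eq_base (n % d) (n / d) ((Nat.le_div_iff_mul_le hd).2 hn), Nat.mod_add_div]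

end IsEventuallyQuasiPolynomial

end CommRing

variable {K : Type*} [Field K] [CharZero K] {d e : ℕ} {f : ℕ → K}

theorem exists_comp_X_add_one_sub_eq (p : K[X]) : ∃ q : K[X], q.comp (X + 1) - q = p := by
  induction p using Polynomial.induction_on' with
  | add p₁ p₂ hp₁ hp₂ =>
    obtain ⟨q₁, rfl⟩ := hp₁
    obtain ⟨q₂, rfl⟩ := hp₂
    exact ⟨q₁ + q₂, by rw [add_comp]; ring⟩
  | monomial n a =>
    let B : K[X] := (Polynomial.bernoulli (n + 1)).map (algebraMap ℚ K)
    have bernoulli_difference : B.comp (X + 1) - B = C ((n : K) + 1) * X ^ n := by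
      have h := congrArg (Polynomial.map (algebraMap ℚ K)) (bernoulli_comp_one_add_X (n + 1))
      simp only [Polynomial.map_comp, Polynomial.map_add, Polynomial.map_one, map_X, nsmul_eq_mul,
        Polynomial.map_mul, Polynomial.map_natCast, Polynomial.map_pow, Nat.add_sub_cancel] at h
      rw [add_comm X 1, h]
      simp [B]
    have hn : (n : K) + 1 ≠ 0 := n.cast_add_one_ne_zero
    refine ⟨C (a / (n + 1)) * B, ?_⟩
    rw [mul_comp, C_comp, ← mul_sub, bernoulli_difference, ← mul_assoc, ← C_mul,
      div_mul_cancel₀ a hn, C_mul_X_pow_eq_monomial]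

theorem exists_comp_X_add_C_sub_eq {h : K} (hh : h ≠ 0) (p : K[X]) :
    ∃ q : K[X], q.comp (X + C h) - q = p := by
  obtain ⟨q, hq⟩ := exists_comp_X_add_one_sub_eq (p.comp (C h * X))
  refine ⟨q.comp (C h⁻¹ * X), ?_⟩
  have rescale := congrArg (fun r => r.comp (C h⁻¹ * X)) hq
  simpa [comp_assoc, mul_add, ← mul_assoc, ← C_mul, hh] using rescale

namespace IsEventuallyQuasiPolynomial

theorem of_fwdDiff (hd : 0 < d) (hf : IsEventuallyQuasiPolynomial d (Δ_[d] f)) :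
    IsEventuallyQuasiPolynomial d f := by
  obtain ⟨p, hp⟩ := hf
  choose q hq using fun r => exists_comp_X_add_C_sub_eq (Nat.cast_ne_zero.2 hd.ne') (p r)
  let F : ℕ → K := fun n => (q (n % d)).eval (n : K)
  have hF : IsEventuallyQuasiPolynomial d F := ⟨q, .of_forall fun _ => rfl⟩
  have periodic : ∀ᶠ n in atTop, (f - F) (n + d) = (f - F) n := by
    filter_upwards [hp] with n hn
    have hqn := congrArg (eval (n : K)) (hq (n % d))
    simp only [eval_sub, eval_comp, eval_add, eval_X, eval_C, ← hn, fwdDiff] at hqn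
    simp only [F, Pi.sub_apply, Nat.add_mod_right, Nat.cast_add]
    linear_combination -hqn
  simpa using (of_eventually_periodic hd periodic).add hF

theorem of_fwdDiff_of_dvd (hd : 0 < d) (hed : e ∣ d)
    (hf : IsEventuallyQuasiPolynomial d (Δ_[e] f)) : IsEventuallyQuasiPolynomial d f := by
  have multiple_step (k : ℕ) : IsEventuallyQuasiPolynomial d (Δ_[e * k] f) := by
    induction k with
    | zero => exact of_eventuallyEq_zero (.of_eq (by ext; simp [fwdDiff]))
    | succ k ih =>
      convert (hf.comp_add_right (e * k)).add ih using 1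
      ext n
      simp [fwdDiff, mul_add, add_assoc]
  obtain ⟨k, rfl⟩ := hed
  exact of_fwdDiff hd (multiple_step k)

end IsEventuallyQuasiPolynomial

end QuasiPolynomial

section Noetherian

variable {R M : Type*} [CommRing R] [AddCommGroup M] [Module R M]

theorem isNoetherianRing_quotient_annihilator [IsNoetherian R M] :
    IsNoetherianRing (R ⧸ Module.annihilator R M) := by
  obtain ⟨n, b, hb⟩ := Module.Finite.exists_fin (R := R) (M := M)
  let f : R →ₗ[R] (Fin n → M) := LinearMap.toSpanSingleton R _ b
  have ker_eq : LinearMap.ker f = Module.annihilator R M := by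
    rw [← Submodule.annihilator_top, ← hb]
    ext r
    simp [f, Submodule.mem_annihilator_span, funext_iff]
  have : IsNoetherian R (R ⧸ Module.annihilator R M) :=
    ker_eq ▸ isNoetherian_of_linearEquiv f.quotKerEquivRange.symm
  exact isNoetherian_of_tower R this

theorem isNoetherian_of_isTorsionBySet [Module.Finite R M] {I : Ideal R} [IsNoetherianRing (R ⧸ I)]
    (hI : Module.IsTorsionBySet R M I) : IsNoetherian R M := by
  let _ := hI.module
  have : Module.Finite (R ⧸ I) M := .of_restrictScalars_finite R _ _
  have : WellFoundedGT (Submodule (R ⧸ I) M) := inferInstance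
  exact isNoetherian_iff'.2
    (Submodule.orderIsoMapComapOfBijective hI.semilinearMap
      Function.bijective_id).toOrderEmbedding.wellFoundedGT

variable {S : Type*} [CommRing S] [Algebra R S] [Module S M] [IsScalarTower R S M]

theorem isNoetherian_of_span_eq_top [Algebra.FiniteType R S] {N : Submodule R M}
    [IsNoetherian R N] (hN : Submodule.span S (N : Set M) = ⊤) : IsNoetherian S M := by
  let I := Module.annihilator R N
  let J := I.map (algebraMap R S)
  have : IsNoetherianRing (R ⧸ I) := isNoetherianRing_quotient_annihilator
  have : Algebra.FiniteType (R ⧸ I) (S ⧸ J) := .of_restrictScalars_finiteType R _ _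
  have : IsNoetherianRing (S ⧸ J) := Algebra.FiniteType.isNoetherianRing (R ⧸ I) _
  have : Module.Finite S M := by
    obtain ⟨T, hT⟩ : N.FG := Module.Finite.iff_fg.1 inferInstance
    exact ⟨T, by rw [← hN, ← hT, Submodule.span_span_of_tower]⟩
  have J_le : J ≤ Module.annihilator S M := by
    refine Ideal.map_le_iff_le_comap.2 fun r hr => ?_
    rw [Ideal.mem_comap, ← Submodule.annihilator_top, ← hN, Submodule.mem_annihilator_span]
    intro n
    rw [algebraMap_smul]
    exact congrArg Subtype.val (Module.mem_annihilator.1 hr n)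
  exact isNoetherian_of_isTorsionBySet ((Module.isTorsionBySet_iff_subset_annihilator S M).2 J_le)

end Noetherian

section Length

variable {R M M' : Type*} [Ring R] [AddCommGroup M] [Module R M] [AddCommGroup M'] [Module R M']

theorem length_add_length_eq_length_inf_comap_add_length_map_sup (φ : M →ₗ[R] M')
    (A : Submodule R M) (P : Submodule R M') :
    Module.length R A + Module.length R P =
      Module.length R ↥(A ⊓ P.comap φ) + Module.length R ↥(A.map φ ⊔ P) := by
  let i : ↥(A ⊓ P.comap φ) →ₗ[R] A × P :=
    (Submodule.inclusion inf_le_left).prod (φ.restrict fun _ h => h.2)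
  let f : A × P →ₗ[R] M' := (φ ∘ₗ A.subtype).coprod (-P.subtype)
  have range_f : LinearMap.range f = A.map φ ⊔ P := by
    simp [f, LinearMap.range_coprod, LinearMap.range_comp, LinearMap.range_neg]
  have exact_i_f : Function.Exact i f.rangeRestrict := by
    rintro ⟨a, p⟩
    have f_eq_zero_iff : f.rangeRestrict (a, p) = 0 ↔ φ a = p := by
      simp [f, Subtype.ext_iff, ← sub_eq_add_neg, sub_eq_zero]
    rw [f_eq_zero_iff]
    constructor
    · intro h
      exact ⟨⟨a, a.2, by simp [h]⟩, Prod.ext rfl (Subtype.ext h)⟩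
    · rintro ⟨m, hm⟩
      obtain ⟨rfl, rfl⟩ := Prod.ext_iff.1 hm
      rfl
  have i_injective : Function.Injective i := fun _ _ h =>
    Submodule.inclusion_injective _ (congrArg Prod.fst h)
  rw [← Module.length_prod, ← range_f]
  exact Module.length_eq_add_of_exact i f.rangeRestrict i_injective f.surjective_rangeRestrict
    exact_i_f

end Length

section Graded

variable {R S M : Type*} [CommRing R] [CommRing S] [AddCommGroup M] [Module R M] [Module S M]
  {ℳ : ℕ → Submodule R M} {x : S} {e : ℕ} {P Q : Submodule S M}

/-- The preimage in `Q` of the kernel of multiplication by `x` on the subquotient `Q / P`. -/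
def smulKer (x : S) (Q P : Submodule S M) : Submodule S M :=
  Q ⊓ P.comap (LinearMap.lsmul S M x)

/-- The preimage in `Q` of the image of multiplication by `x` on the subquotient `Q / P`. -/
def smulRange (x : S) (Q P : Submodule S M) : Submodule S M :=
  Q.map (LinearMap.lsmul S M x) ⊔ P

theorem mem_smulRange {m : M} : m ∈ smulRange x Q P ↔ ∃ q ∈ Q, ∃ p ∈ P, x • q + p = m := by
  simp [smulRange, Submodule.mem_sup]

theorem le_smulKer (x : S) (hPQ : P ≤ Q) : P ≤ smulKer x Q P :=
  le_inf hPQ fun _ hp => P.smul_mem x hp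

theorem smulRange_le (x : S) (hPQ : P ≤ Q) : smulRange x Q P ≤ Q :=
  sup_le (Submodule.map_le_iff_le_comap.2 fun _ hq => Q.smul_mem x hq) hPQ

section Decomposition

variable [Decomposition ℳ]

theorem decompose_smul_of_shift (hx : ∀ ⦃n m⦄, m ∈ ℳ n → x • m ∈ ℳ (n + e)) (m : M) (n : ℕ) :
    (decompose ℳ (x • m) n : M) = if e ≤ n then x • (decompose ℳ m (n - e) : M) else 0 := by
  induction m using Decomposition.inductionOn ℳ with
  | zero => simp
  | @homogeneous k m =>
    rw [decompose_of_mem ℳ (hx m.2), decompose_coe, coe_of_apply, coe_of_apply]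
    by_cases hk : k + e = n
    · simp [← hk]
    · have : e ≤ n → k ≠ n - e := by omega
      simp_all
  | add a b ha hb =>
    simp only [smul_add, decompose_add, DirectSum.add_apply, Submodule.coe_add, ha, hb]
    split_ifs <;> simp

theorem decompose_smul_add (hx : ∀ ⦃n m⦄, m ∈ ℳ n → x • m ∈ ℳ (n + e)) (m : M) (n : ℕ) :
    (decompose ℳ (x • m) (n + e) : M) = x • (decompose ℳ m n : M) := by
  rw [decompose_smul_of_shift hx, if_pos (Nat.le_add_left e n), Nat.add_sub_cancel]

theorem isHomogeneous_smulKer (hx : ∀ ⦃n m⦄, m ∈ ℳ n → x • m ∈ ℳ (n + e))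
    (hQ : Q.IsHomogeneous ℳ) (hP : P.IsHomogeneous ℳ) : (smulKer x Q P).IsHomogeneous ℳ := by
  rintro n m ⟨hmQ, hmP⟩
  refine ⟨hQ n hmQ, ?_⟩
  rw [Submodule.comap_coe, Set.mem_preimage, LinearMap.lsmul_apply, ← decompose_smul_add hx]
  exact hP (n + e) hmP

theorem isHomogeneous_smulRange (hx : ∀ ⦃n m⦄, m ∈ ℳ n → x • m ∈ ℳ (n + e))
    (hQ : Q.IsHomogeneous ℳ) (hP : P.IsHomogeneous ℳ) : (smulRange x Q P).IsHomogeneous ℳ := by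
  intro n m hm
  obtain ⟨q, hq, p, hp, rfl⟩ := mem_smulRange.1 hm
  rw [decompose_add, DirectSum.add_apply, Submodule.coe_add, decompose_smul_of_shift hx]
  refine add_mem ?_ (Submodule.mem_sup_right (hP n hp))
  split_ifs
  · exact Submodule.mem_sup_left (Submodule.mem_map_of_mem (hQ _ hq))
  · exact zero_mem _

theorem eventually_decompose_eq_zero (m : M) : ∀ᶠ n in atTop, (decompose ℳ m n : M) = 0 := by
  have h := (decompose ℳ m).hasFiniteSupport.eventually_cofinite_notMem
  rw [Nat.cofinite_eq_atTop] at h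
  filter_upwards [h] with n hn
  exact not_not.1 hn

end Decomposition

variable [Algebra R S] [IsScalarTower R S M]

theorem smul_mem_of_adjoin_eq_top {X : Set S} (hX : Algebra.adjoin R X = ⊤) {W : Submodule R M}
    (hW : ∀ y ∈ X, ∀ m ∈ W, y • m ∈ W) (s : S) {m : M} (hm : m ∈ W) : s • m ∈ W := by
  have hs : s ∈ Algebra.adjoin R X := hX ▸ Algebra.mem_top
  induction hs using Algebra.adjoin_induction generalizing m with
  | mem y hy => exact hW y hy m hm
  | algebraMap r => rw [algebraMap_smul]; exact W.smul_mem r hm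
  | add a b _ _ iha ihb => rw [add_smul]; exact W.add_mem (iha hm) (ihb hm)
  | mul a b _ _ iha ihb => rw [mul_smul]; exact iha (ihb hm)

variable (ℳ) in
/-- The degree `n` part `Q ∩ ℳ n` of an `S`-submodule `Q` of the graded module `M`, as a module
over the base ring `R`. -/
def homogeneousPart (Q : Submodule S M) (n : ℕ) : Submodule R M :=
  Q.restrictScalars R ⊓ ℳ n

variable (ℳ) in
/-- The Hilbert function of an `S`-submodule `Q` of the graded module `M`: the `R`-length of its
degree `n` part, with the junk value `0` where that length is infinite. -/
noncomputable def hilbertFunction (Q : Submodule S M) (n : ℕ) : ℕ :=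
  (Module.length R (homogeneousPart ℳ Q n)).toNat

theorem length_homogeneousPart_ne_top (hℳ : ∀ n, IsFiniteLength R (ℳ n)) (Q : Submodule S M)
    (n : ℕ) : Module.length R (homogeneousPart ℳ Q n) ≠ ⊤ :=
  Module.length_ne_top_iff.2 <|
    (hℳ n).of_injective (Submodule.inclusion_injective (inf_le_right : homogeneousPart ℳ Q n ≤ _))

theorem hilbertFunction_top (n : ℕ) :
    hilbertFunction ℳ (⊤ : Submodule S M) n = (Module.length R (ℳ n)).toNat := by
  have part_top : homogeneousPart ℳ (⊤ : Submodule S M) n = ℳ n := by simp [homogeneousPart]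
  rw [hilbertFunction, part_top]

theorem hilbertFunction_bot (n : ℕ) : hilbertFunction ℳ (⊥ : Submodule S M) n = 0 := by
  have part_bot : homogeneousPart ℳ (⊥ : Submodule S M) n = ⊥ := by simp [homogeneousPart]
  rw [hilbertFunction, part_bot, Module.length_bot, ENat.toNat_zero]

variable [Decomposition ℳ]

theorem hilbertFunction_add_hilbertFunction_add (hℳ : ∀ n, IsFiniteLength R (ℳ n))
    (hx : ∀ ⦃n m⦄, m ∈ ℳ n → x • m ∈ ℳ (n + e)) (hQ : Q.IsHomogeneous ℳ) (hP : P.IsHomogeneous ℳ)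
    (n : ℕ) :
    hilbertFunction ℳ Q n + hilbertFunction ℳ P (n + e) =
      hilbertFunction ℳ (smulKer x Q P) n + hilbertFunction ℳ (smulRange x Q P) (n + e) := by
  let φ : M →ₗ[R] M := (LinearMap.lsmul S M x).restrictScalars R
  have ker_part : homogeneousPart ℳ Q n ⊓ (homogeneousPart ℳ P (n + e)).comap φ =
      homogeneousPart ℳ (smulKer x Q P) n := by
    ext m
    constructor
    · rintro ⟨⟨hmQ, hmn⟩, hmP, -⟩
      exact ⟨⟨hmQ, hmP⟩, hmn⟩
    · rintro ⟨⟨hmQ, hmP⟩, hmn⟩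
      exact ⟨⟨hmQ, hmn⟩, hmP, hx hmn⟩
  have range_part : (homogeneousPart ℳ Q n).map φ ⊔ homogeneousPart ℳ P (n + e) =
      homogeneousPart ℳ (smulRange x Q P) (n + e) := by
    ext m
    rw [Submodule.mem_sup]
    constructor
    · rintro ⟨_, ⟨q, ⟨hq, hqn⟩, rfl⟩, p, ⟨hp, hpn⟩, rfl⟩
      exact ⟨mem_smulRange.2 ⟨q, hq, p, hp, rfl⟩, add_mem (hx hqn) hpn⟩
    · rintro ⟨hm, hmn⟩
      obtain ⟨q, hq, p, hp, rfl⟩ := mem_smulRange.1 hm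
      refine ⟨_, ⟨decompose ℳ q n, ⟨hQ n hq, SetLike.coe_mem _⟩, rfl⟩,
        decompose ℳ p (n + e), ⟨hP _ hp, SetLike.coe_mem _⟩, ?_⟩
      rw [← decompose_of_mem_same ℳ hmn, decompose_add, DirectSum.add_apply, Submodule.coe_add,
        decompose_smul_add hx]
      rfl
  have length_eq := length_add_length_eq_length_inf_comap_add_length_map_sup φ
    (homogeneousPart ℳ Q n) (homogeneousPart ℳ P (n + e))
  rw [ker_part, range_part] at length_eq
  simpa only [hilbertFunction, ENat.toNat_add, length_homogeneousPart_ne_top hℳ, ne_eq,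
    not_false_eq_true] using congrArg ENat.toNat length_eq

theorem fwdDiff_hilbertFunction_sub (K : Type*) [CommRing K] (hℳ : ∀ n, IsFiniteLength R (ℳ n))
    (hx : ∀ ⦃n m⦄, m ∈ ℳ n → x • m ∈ ℳ (n + e)) (hQ : Q.IsHomogeneous ℳ)
    (hP : P.IsHomogeneous ℳ) :
    Δ_[e] (fun n => (hilbertFunction ℳ Q n - hilbertFunction ℳ P n : K)) =
      (fun n => (hilbertFunction ℳ Q (n + e) - hilbertFunction ℳ (smulRange x Q P) (n + e) : K)) -
        fun n => (hilbertFunction ℳ (smulKer x Q P) n - hilbertFunction ℳ P n : K) := by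
  ext n
  have additivity := congrArg (Nat.cast (R := K))
    (hilbertFunction_add_hilbertFunction_add hℳ hx hQ hP n)
  push_cast at additivity
  simp only [fwdDiff, Pi.sub_apply]
  linear_combination -additivity

theorem eventually_homogeneousPart_eq {X : Set S} (hX : Algebra.adjoin R X = ⊤) (hQ : Q.FG)
    (hP : P.IsHomogeneous ℳ) (hPQ : P ≤ Q) (hXQ : ∀ y ∈ X, ∀ q ∈ Q, y • q ∈ P) :
    ∀ᶠ n in atTop, homogeneousPart ℳ Q n = homogeneousPart ℳ P n := by
  obtain ⟨T, rfl⟩ := hQ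
  obtain ⟨N, hN⟩ := eventually_atTop.1 <|
    T.eventually_all.2 fun q _ => eventually_decompose_eq_zero (ℳ := ℳ) q
  let component (n : ℕ) : M →ₗ[R] M :=
    (ℳ n).subtype ∘ₗ DirectSum.component R ℕ _ n ∘ₗ (decomposeLinearEquiv ℳ).toLinearMap
  let W : Submodule R M := (Submodule.span S (T : Set M)).restrictScalars R ⊓
    ⨅ n ≥ N, (P.restrictScalars R).comap (component n)
  have mem_W (m : M) : m ∈ W ↔
      m ∈ Submodule.span S (T : Set M) ∧ ∀ n ≥ N, (decompose ℳ m n : M) ∈ P := by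
    simp only [W, Submodule.mem_inf, Submodule.mem_iInf, Submodule.mem_comap]
    rfl
  have P_le_W (m : M) (hm : m ∈ P) : m ∈ W := (mem_W m).2 ⟨hPQ hm, fun n _ => hP n hm⟩
  have X_smul_W (y : S) (hy : y ∈ X) (m : M) (hm : m ∈ W) : y • m ∈ W :=
    P_le_W _ (hXQ y hy m hm.1)
  have Q_le_W (m : M) (hm : m ∈ Submodule.span S (T : Set M)) : m ∈ W := by
    induction hm using Submodule.span_induction with
    | mem q hq => exact (mem_W q).2 ⟨Submodule.subset_span hq, fun n hn => by simp [hN n hn q hq]⟩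
    | zero => exact W.zero_mem
    | add a b _ _ ha hb => exact W.add_mem ha hb
    | smul s m _ hm => exact smul_mem_of_adjoin_eq_top hX X_smul_W s hm
  refine eventually_atTop.2 ⟨N, fun n hn => le_antisymm ?_ (inf_le_inf_right _ hPQ)⟩
  rintro m ⟨hmQ, hmn⟩
  exact ⟨decompose_of_mem_same ℳ hmn ▸ ((mem_W m).1 (Q_le_W m hmQ)).2 n hn, hmn⟩

theorem isNoetherian_of_isNoetherian_homogeneous [Algebra.FiniteType R S] [Module.Finite S M]
    (hℳ : ∀ n, IsNoetherian R (ℳ n)) : IsNoetherian S M := by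
  classical
  obtain ⟨T, hT⟩ := Module.Finite.fg_top (R := S) (M := M)
  let degrees : Finset ℕ := T.biUnion fun m => (decompose ℳ m).support
  refine isNoetherian_of_span_eq_top (N := ⨆ n : degrees, ℳ n) (top_le_iff.1 ?_)
  rw [← hT]
  refine Submodule.span_mono fun m hm => ?_
  rw [SetLike.mem_coe, ← sum_support_decompose ℳ m]
  exact Submodule.sum_mem _ fun n hn => Submodule.mem_iSup_of_mem
    (⟨n, Finset.mem_biUnion.2 ⟨m, hm, hn⟩⟩ : degrees) (SetLike.coe_mem _)

variable (K : Type*) [Field K] [CharZero K] {ι : Type*} {y : ι → S} {deg : ι → ℕ} {d : ℕ}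

theorem isEventuallyQuasiPolynomial_hilbertFunction_sub [IsNoetherian S M]
    (hℳ : ∀ n, IsFiniteLength R (ℳ n)) (hgen : Algebra.adjoin R (Set.range y) = ⊤)
    (hy : ∀ i, ∀ ⦃n m⦄, m ∈ ℳ n → y i • m ∈ ℳ (n + deg i)) (hd : 0 < d)
    (hdeg : ∀ i, deg i ∣ d) (hQ : Q.IsHomogeneous ℳ) (hP : P.IsHomogeneous ℳ) (hPQ : P ≤ Q)
    (s : Finset ι) (hs : ∀ i ∉ s, ∀ q ∈ Q, y i • q ∈ P) :
    IsEventuallyQuasiPolynomial d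
      (fun n => (hilbertFunction ℳ Q n - hilbertFunction ℳ P n : K)) := by
  classical
  induction s using Finset.induction_on generalizing P Q with
  | empty =>
    refine .of_eventuallyEq_zero ?_
    filter_upwards [eventually_homogeneousPart_eq hgen (IsNoetherian.noetherian Q) hP hPQ
      (by simpa using hs)] with n hn
    rw [hilbertFunction, hilbertFunction, hn, sub_self, Pi.zero_apply]
  | insert j s _ ih =>
    have smul_mem_P (i : ι) (hi : i ∉ s) (hij : i ≠ j) : ∀ q ∈ Q, y i • q ∈ P :=
      hs i (by simp [hi, hij])
    have ker := ih (isHomogeneous_smulKer (hy j) hQ hP) hP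
      (le_smulKer (y j) hPQ) fun i hi q hq => by
        obtain rfl | hij := eq_or_ne i j
        · exact hq.2
        · exact smul_mem_P i hi hij q hq.1
    have coker := ih hQ (isHomogeneous_smulRange (hy j) hQ hP)
      (smulRange_le (y j) hPQ) fun i hi q hq => by
        obtain rfl | hij := eq_or_ne i j
        · exact Submodule.mem_sup_left (Submodule.mem_map_of_mem hq)
        · exact Submodule.mem_sup_right (smul_mem_P i hi hij q hq)
    refine .of_fwdDiff_of_dvd hd (hdeg j) ?_
    rw [fwdDiff_hilbertFunction_sub K hℳ (hy j) hQ hP]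
    exact (coker.comp_add_right (deg j)).sub ker

theorem isEventuallyQuasiPolynomial_length [Finite ι] [Module.Finite S M]
    (hℳ : ∀ n, IsFiniteLength R (ℳ n)) (hgen : Algebra.adjoin R (Set.range y) = ⊤)
    (hy : ∀ i, ∀ ⦃n m⦄, m ∈ ℳ n → y i • m ∈ ℳ (n + deg i)) (hd : 0 < d)
    (hdeg : ∀ i, deg i ∣ d) :
    IsEventuallyQuasiPolynomial d (fun n => ((Module.length R (ℳ n)).toNat : K)) := by
  cases nonempty_fintype ι
  have : Algebra.FiniteType R S := ⟨Subalgebra.fg_def.2 ⟨_, Set.finite_range y, hgen⟩⟩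
  have : IsNoetherian S M := isNoetherian_of_isNoetherian_homogeneous (ℳ := ℳ) fun n =>
    (isFiniteLength_iff_isNoetherian_isArtinian.1 (hℳ n)).1
  simpa only [hilbertFunction_top, hilbertFunction_bot, Nat.cast_zero, sub_zero] using
    isEventuallyQuasiPolynomial_hilbertFunction_sub K hℳ hgen hy hd hdeg
      (Q := ⊤) (P := ⊥) (fun _ _ _ => Submodule.mem_top)
      (fun n m hm => by simp [(Submodule.mem_bot S).1 hm]) bot_le Finset.univ (by simp)

theorem stmt_5_general [Fintype ι] [Module.Finite S M]
    (hℳ : ∀ n, IsFiniteLength R (ℳ n)) (hgen : Algebra.adjoin R (Set.range y) = ⊤)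
    (hy : ∀ i, ∀ ⦃n m⦄, m ∈ ℳ n → y i • m ∈ ℳ (n + deg i)) (hdeg : ∀ i, 0 < deg i) :
    ∃ (g : ℕ → K[X]) (N : ℕ), ∀ n ≥ N, ∃ s : CompositionSeries (Submodule R (ℳ n)),
      s.head = ⊥ ∧ s.last = ⊤ ∧ (g (n % Finset.univ.lcm deg)).eval (n : K) = (s.length : K) := by
  have lcm_pos : 0 < Finset.univ.lcm deg := by
    simp [Nat.pos_iff_ne_zero, Finset.lcm_eq_zero_iff, (hdeg _).ne']
  obtain ⟨g, hg⟩ := isEventuallyQuasiPolynomial_length K hℳ hgen hy lcm_pos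
    fun i => Finset.dvd_lcm (Finset.mem_univ i)
  obtain ⟨N, hN⟩ := eventually_atTop.1 hg
  refine ⟨g, N, fun n hn => ?_⟩
  obtain ⟨s, s_head, s_last⟩ := isFiniteLength_iff_exists_compositionSeries.1 (hℳ n)
  refine ⟨s, s_head, s_last, ?_⟩
  simp [← hN n hn, ← Module.length_compositionSeries s s_head s_last]

end Graded

theorem adjoin_eq_top_of_closure_union_eq_top {S : Type*} [CommRing S] {S₀ : Subring S}
    {X : Set S} (h : Subring.closure ((S₀ : Set S) ∪ X) = ⊤) : Algebra.adjoin S₀ X = ⊤ := by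
  have range_eq : Set.range (algebraMap S₀ S) = S₀ := Subtype.range_coe
  refine eq_top_iff.2 fun s _ => ?_
  rw [Algebra.mem_adjoin_iff, range_eq, h]
  exact Subring.mem_top s

/-- Hilbert–Serre.  Let `S` be a non-negatively graded commutative
Noetherian ring, generated as an algebra over `S⁰` by homogeneous elements
`x 1, …, x t` of positive degrees, and set `d = lcm (deg x i)`.  Let `M` be a finitely
generated non-negatively graded `S`-module each of whose graded components `ℳ n` has
finite length over the degree-zero subring `S0`.  Then there are complex polynomials
`g 0, …, g (d-1)` and an integer `N` such that for `n ≥ N` the length of `ℳ n` over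
`S0` equals `g (n % d)` evaluated at `n` (the length is expressed as the length of any
composition series of `ℳ n`). -/
theorem stmt_5 {S M : Type*} [CommRing S] [AddCommGroup M] [Module S M]
    (𝒜 : ℕ → AddSubgroup S) [GradedRing 𝒜] [IsNoetherianRing S]
    (S0 : Subring S) (hS0 : (S0 : Set S) = (𝒜 0 : Set S))
    (ℳ : ℕ → Submodule S0 M) [SetLike.GradedSMul 𝒜 ℳ] [DirectSum.Decomposition ℳ]
    [Module.Finite S M]
    (hlen : ∀ n : ℕ, IsFiniteLength S0 (ℳ n))
    {t : ℕ} (x : Fin t → S) (dx : Fin t → ℕ) (hdx : ∀ i, 0 < dx i)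
    (hxdeg : ∀ i, x i ∈ 𝒜 (dx i))
    (hgen : Subring.closure ((𝒜 0 : Set S) ∪ Set.range x) = ⊤) :
    ∃ (g : ℕ → Polynomial ℂ) (N : ℕ), ∀ n ≥ N,
      ∃ s : CompositionSeries (Submodule S0 (ℳ n)),
        s.head = ⊥ ∧ s.last = ⊤ ∧
        (g (n % Finset.univ.lcm dx)).eval (n : ℂ) = (s.length : ℂ) := by
  have smul_mem (i : Fin t) (n : ℕ) (m : M) (hm : m ∈ ℳ n) : x i • m ∈ ℳ (n + dx i) :=
    add_comm (dx i) n ▸ SetLike.GradedSMul.smul_mem (hxdeg i) hm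
  exact stmt_5_general ℂ hlen (adjoin_eq_top_of_closure_union_eq_top (hS0 ▸ hgen)) smul_mem hdx
end

section
/- Let A be a commutative Noetherian local ring which is a complete intersection: there exist a regular local ring S and a regular sequence x_1, …, x_c contained in the maximal ideal of S such that the completion of A with respect to its maximal ideal is isomorphic to S/(x_1, …, x_c). Let M and N be finitely generated A-modules. Then either Ext_A^n(M, N) = 0 for all n > dim A (the Krull dimension of A), or there exists a non-negative integer m_0 such that Ext_A^n(M, N) ≠ 0 for all even integers n ≥ m_0, or Ext_A^n(M, N) ≠ 0 for all odd integers n ≥ m_0. -/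
open CategoryTheory

/-- The `n`-th Ext group of two `A`-modules, as an object of `ModuleCat A`. -/
noncomputable abbrev extGroup (A : Type) [CommRing A] (M N : Type) [AddCommGroup M]
    [Module A M] [AddCommGroup N] [Module A N] (n : ℕ) : ModuleCat A :=
  ((_root_.Ext A (ModuleCat A) n).obj (Opposite.op (ModuleCat.of A M))).obj (ModuleCat.of A N)

/-!
Faithfully flat base change replaces `A` by its completion `S/(x₁, …, x_c)`. A finitely generated
module `M` over this quotient has a finite `S`-projective resolution, and the resolution can be
chosen so that each `x_k` acts on it null-homotopically by strictly anticommuting, square-zero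
homotopies. Shamash's construction turns such a resolution over `S/(x₁, …, x_k)` into one over
`S/(x₁, …, x_{k+1})`, uses up one homotopy and adds one polynomial generator `χ` of degree two to
the dual complex. After `c` steps, `Ext_A(M, N)` is the cohomology of a finitely generated dg-module
over the Noetherian ring `S[χ₁, …, χ_c]`, hence a finitely generated module generated in bounded
degrees, so `Ext^i = 0` implies `Ext^{i+2} = 0` for all large `i`. If it vanishes for one large even
and one large odd `i`, it vanishes in all large degrees; since `Ext_S(M, N)` vanishes above `dim S`
and each step lowers this bound by one, it then vanishes above `dim S - c = dim A`.
-/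

universe u v

section Gradings

variable {S X Y : Type*} [CommRing S] [AddCommGroup X] [Module S X] [AddCommGroup Y] [Module S Y]

/-- The endomorphism of `ℕ →₀ X` acting on the `k`-th coordinate through `T k`. -/
noncomputable def coordwiseMap (T : ℕ → X →ₗ[S] X) : (ℕ →₀ X) →ₗ[S] (ℕ →₀ X) :=
  Finsupp.lsum S fun k => Finsupp.lsingle k ∘ₗ T k

lemma coordwiseMap_single (T : ℕ → X →ₗ[S] X) (k : ℕ) (y : X) :
    coordwiseMap T (Finsupp.single k y) = Finsupp.single k (T k y) := by
  simp [coordwiseMap]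

lemma coordwiseMap_apply (T : ℕ → X →ₗ[S] X) (z : ℕ →₀ X) (k : ℕ) :
    coordwiseMap T z k = T k (z k) := by
  induction z using Finsupp.induction_linear with
  | zero => simp
  | add z z' hz hz' => simp [hz, hz']
  | single j y =>
    rw [coordwiseMap_single]
    by_cases h : j = k
    · subst h; simp
    · simp [h]

/-- An `ℕ`-grading of an `S`-module, given by the projections onto its homogeneous components.
The degrees live in `ℤ`, with vanishing negative components, so that degree shifts need no
case distinctions. -/
structure Grading (S X : Type*) [CommRing S] [AddCommGroup X] [Module S X] where
  proj : ℤ → X →ₗ[S] X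
  proj_proj : ∀ i j y, proj i (proj j y) = if i = j then proj j y else 0
  proj_of_neg : ∀ i y, i < 0 → proj i y = 0
  finite_support : ∀ y, {i | proj i y ≠ 0}.Finite
  eq_zero_of_proj : ∀ y, (∀ i, proj i y = 0) → y = 0

namespace Grading

lemma proj_proj_self (G : Grading S X) (i : ℤ) (y : X) : G.proj i (G.proj i y) = G.proj i y := by
  rw [G.proj_proj, if_pos rfl]

lemma proj_proj_of_ne (G : Grading S X) {i j : ℤ} (h : i ≠ j) (y : X) :
    G.proj i (G.proj j y) = 0 := by
  rw [G.proj_proj, if_neg h]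

lemma sum_proj (G : Grading S X) {y : X} {s : Finset ℤ} (hs : ∀ i ∉ s, G.proj i y = 0) :
    ∑ i ∈ s, G.proj i y = y := by
  refine sub_eq_zero.1 (G.eq_zero_of_proj _ fun j => ?_)
  simp only [map_sub, map_sum, G.proj_proj, Finset.sum_ite_eq, sub_eq_zero]
  split_ifs with hj
  · rfl
  · exact (hs j hj).symm

lemma sum_proj_support (G : Grading S X) (y : X) :
    ∑ i ∈ (G.finite_support y).toFinset, G.proj i y = y :=
  G.sum_proj fun i hi => by simpa using hi

lemma exists_forall_proj_eq_zero (G : Grading S X) [Module.Finite S X] :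
    ∃ L : ℕ, ∀ i : ℤ, L ≤ i → G.proj i = 0 := by
  obtain ⟨s, hs⟩ := Module.Finite.fg_top (R := S) (M := X)
  have hbound : ∀ y, ∃ L : ℕ, ∀ i : ℤ, L ≤ i → G.proj i y = 0 := fun y => by
    obtain ⟨b, hb⟩ := (G.finite_support y).bddAbove
    refine ⟨b.toNat + 1, fun i hi => by_contra fun h => ?_⟩
    have := hb h
    omega
  choose L hL using hbound
  refine ⟨s.sup L, fun i hi => LinearMap.ext_on hs fun y hy => hL y i ?_⟩
  have := Finset.le_sup (f := L) hy
  omega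

/-- The grading of `ι → Y` whose coordinate of index `k` has degree `w k`. -/
noncomputable def pi {ι : Type*} [Finite ι] (w : ι → ℕ) : Grading S (ι → Y) where
  proj i := LinearMap.pi fun k => if (w k : ℤ) = i then LinearMap.proj k else 0
  proj_proj i j y := by
    ext k
    by_cases h : i = j <;> by_cases h' : (w k : ℤ) = i <;> simp_all
  proj_of_neg i y hi := by
    ext k
    simp [show (w k : ℤ) ≠ i by omega]
  finite_support y := by
    refine (Set.finite_range fun k => (w k : ℤ)).subset fun i hi => ?_
    obtain ⟨k, hk⟩ := Function.ne_iff.1 hi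
    by_contra h
    exact hk (by simp [show (w k : ℤ) ≠ i from fun e => h ⟨k, e⟩])
  eq_zero_of_proj y hy := by
    ext k
    simpa using congrFun (hy (w k)) k

lemma pi_proj_apply {ι : Type*} [Finite ι] (w : ι → ℕ) (i : ℤ) (y : ι → Y) (k : ι) :
    (pi w : Grading S (ι → Y)).proj i y k = if (w k : ℤ) = i then y k else 0 := by
  simp only [pi, LinearMap.pi_apply]
  split_ifs <;> rfl

/-- The grading of a module concentrated in degree `0`. -/
noncomputable def concentrated (S X : Type*) [CommRing S] [AddCommGroup X] [Module S X] :
    Grading S X where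
  proj i := if i = 0 then LinearMap.id else 0
  proj_proj i j y := by
    by_cases h : i = 0 <;> by_cases h' : j = 0 <;> simp [h, h', eq_comm]
  proj_of_neg i y hi := by simp [hi.ne]
  finite_support y := (Set.finite_singleton (0 : ℤ)).subset fun i hi => by_contra fun h =>
    hi (by simp [show i ≠ 0 from h])
  eq_zero_of_proj y hy := by simpa using hy 0

/-- The direct sum of a graded module and the shift by one of another one. -/
noncomputable def prodShift (G : Grading S X) (H : Grading S Y) : Grading S (X × Y) where
  proj i := (G.proj i).prodMap (H.proj (i - 1))
  proj_proj i j y := by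
    by_cases h : i = j <;> ext <;> simp [G.proj_proj, H.proj_proj, h]
  proj_of_neg i y hi := by
    ext <;> simp [G.proj_of_neg i _ hi, H.proj_of_neg (i - 1) _ (by omega)]
  finite_support y := by
    refine ((G.finite_support y.1).union ((H.finite_support y.2).image (· + 1))).subset ?_
    rintro i hi
    by_contra h
    simp only [Set.mem_union, Set.mem_image, Set.mem_ofPred_eq, not_or, not_exists, not_and,
      ne_eq, not_not] at h
    refine hi (Prod.ext h.1 (by_contra fun h' => h.2 (i - 1) h' (by omega)))
  eq_zero_of_proj y hy := by
    refine Prod.ext (G.eq_zero_of_proj _ fun i => congrArg Prod.fst (hy i))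
      (H.eq_zero_of_proj _ fun i => ?_)
    simpa using congrArg Prod.snd (hy (i + 1))

/-- The grading induced on a submodule stable under the projections. -/
noncomputable def restrict (G : Grading S X) (V : Submodule S X)
    (hV : ∀ i, ∀ y ∈ V, G.proj i y ∈ V) : Grading S V where
  proj i := (G.proj i).restrict (hV i)
  proj_proj i j y := Subtype.ext <| by
    by_cases h : i = j <;> simp [G.proj_proj, h]
  proj_of_neg i y hi := Subtype.ext (G.proj_of_neg i y hi)
  finite_support y := (G.finite_support y).subset fun _ hi h => hi (Subtype.ext h)
  eq_zero_of_proj y hy := Subtype.ext (G.eq_zero_of_proj _ fun i => congrArg Subtype.val (hy i))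

/-- The grading induced on `X / rX`. -/
noncomputable def quotSMulTop (G : Grading S X) (r : S) : Grading S (QuotSMulTop r X) where
  proj i := QuotSMulTop.map r (G.proj i)
  proj_proj i j q := by
    induction q using Submodule.Quotient.induction_on with | _ y
    by_cases h : i = j <;> simp [G.proj_proj, h]
  proj_of_neg i q hi := by
    induction q using Submodule.Quotient.induction_on with | _ y
    simp [G.proj_of_neg i y hi]
  finite_support q := by
    induction q using Submodule.Quotient.induction_on with | _ y
    exact (G.finite_support y).subset fun i hi h => hi (by simp [h])
  eq_zero_of_proj q hq := by
    induction q using Submodule.Quotient.induction_on with | _ y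
    rw [← G.sum_proj_support y, ← Submodule.mkQ_apply, map_sum]
    exact Finset.sum_eq_zero fun i _ => hq i

/-- The grading of `ℕ →₀ X` in which the `k`-th coordinate is shifted by `2 * k`. -/
noncomputable def finsupp (G : Grading S X) : Grading S (ℕ →₀ X) where
  proj i := coordwiseMap fun k => G.proj (i - 2 * k)
  proj_proj i j y := by
    ext k
    by_cases h : i = j <;> simp [coordwiseMap_apply, G.proj_proj, h]
  proj_of_neg i y hi := by
    ext k
    rw [coordwiseMap_apply, G.proj_of_neg _ _ (by omega), Finsupp.zero_apply]
  finite_support y := by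
    refine (y.support.finite_toSet.biUnion fun k _ =>
      (G.finite_support (y k)).image (· + 2 * (k : ℤ))).subset fun i hi => ?_
    obtain ⟨k, hk⟩ := DFunLike.ne_iff.1 hi
    rw [coordwiseMap_apply, Finsupp.zero_apply] at hk
    have hyk : y k ≠ 0 := fun h => hk (by rw [h, map_zero])
    exact Set.mem_biUnion (Finsupp.mem_support_iff.2 hyk) ⟨i - 2 * k, hk, sub_add_cancel _ _⟩
  eq_zero_of_proj y hy := by
    ext k
    refine G.eq_zero_of_proj _ fun i => ?_
    simpa [coordwiseMap_apply] using DFunLike.congr_fun (hy (i + 2 * k)) k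

end Grading

end Gradings

section KoszulDGModules

/-- A nonnegatively graded complex of `S`-modules `(X, d)` with pairwise anticommuting,
square-zero homotopies `e k` of degree one for multiplication by the elements `x k`: a dg-module
over the Koszul complex of the family `x`. -/
structure KoszulDGModule {S : Type*} [CommRing S] {n : ℕ} (x : Fin n → S) (X : Type*)
    [AddCommGroup X] [Module S X] extends Grading S X where
  d : X →ₗ[S] X
  e : Fin n → X →ₗ[S] X
  d_d : ∀ y, d (d y) = 0
  proj_d : ∀ i y, proj i (d y) = d (proj (i + 1) y)
  proj_e : ∀ k i y, proj i (e k y) = e k (proj (i - 1) y)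
  e_e_self : ∀ k y, e k (e k y) = 0
  e_anticomm : ∀ k l y, e k (e l y) = -e l (e k y)
  d_e : ∀ k y, d (e k y) = x k • y - e k (d y)

namespace KoszulDGModule

variable {S X Y : Type*} [CommRing S] [AddCommGroup X] [Module S X] [AddCommGroup Y] [Module S Y]
variable {n : ℕ} {x : Fin n → S} {x' : Fin (n + 1) → S}

/-- Morphisms of dg-modules over the Koszul complex of `x`. -/
structure IsHom (K : KoszulDGModule x X) (L : KoszulDGModule x Y) (f : X →ₗ[S] Y) : Prop where
  map_proj : ∀ i y, f (K.proj i y) = L.proj i (f y)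
  map_d : ∀ y, f (K.d y) = L.d (f y)
  map_e : ∀ k y, f (K.e k y) = L.e k (f y)

lemma d_proj_zero (K : KoszulDGModule x X) (y : X) : K.d (K.proj 0 y) = 0 := by
  rw [show (0 : ℤ) = -1 + 1 by norm_num, ← K.proj_d, K.proj_of_neg _ _ (by norm_num)]

/-- Restriction of scalars to the Koszul complex of `Fin.tail x'`: forget the homotopy `e 0`. -/
def tail (K : KoszulDGModule x' X) : KoszulDGModule (Fin.tail x') X where
  toGrading := K.toGrading
  d := K.d
  e k := K.e k.succ
  d_d := K.d_d
  proj_d := K.proj_d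
  proj_e k := K.proj_e k.succ
  e_e_self k := K.e_e_self k.succ
  e_anticomm k l := K.e_anticomm k.succ l.succ
  d_e k := K.d_e k.succ

/-- The kernel of a morphism. -/
noncomputable def ker {K : KoszulDGModule x X} {L : KoszulDGModule x Y} {f : X →ₗ[S] Y}
    (hf : IsHom K L f) : KoszulDGModule x (LinearMap.ker f) where
  toGrading := K.toGrading.restrict (LinearMap.ker f) fun i y hy => by
    rw [LinearMap.mem_ker] at hy ⊢
    rw [hf.map_proj, hy, map_zero]
  d := K.d.restrict fun y hy => by
    rw [LinearMap.mem_ker] at hy ⊢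
    rw [hf.map_d, hy, map_zero]
  e k := (K.e k).restrict fun y hy => by
    rw [LinearMap.mem_ker] at hy ⊢
    rw [hf.map_e, hy, map_zero]
  d_d y := Subtype.ext (K.d_d y)
  proj_d i y := Subtype.ext (K.proj_d i y)
  proj_e k i y := Subtype.ext (K.proj_e k i y)
  e_e_self k y := Subtype.ext (K.e_e_self k y)
  e_anticomm k l y := Subtype.ext (K.e_anticomm k l y)
  d_e k y := Subtype.ext (K.d_e k y)

lemma isHom_subtype_ker {K : KoszulDGModule x X} {L : KoszulDGModule x Y} {f : X →ₗ[S] Y}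
    (hf : IsHom K L f) : IsHom (ker hf) K (LinearMap.ker f).subtype :=
  ⟨fun _ _ => rfl, fun _ => rfl, fun _ _ => rfl⟩

lemma IsHom.comp {Z : Type*} [AddCommGroup Z] [Module S Z] {K : KoszulDGModule x X}
    {L : KoszulDGModule x Y} {M : KoszulDGModule x Z} {g : Y →ₗ[S] Z} {f : X →ₗ[S] Y}
    (hg : IsHom L M g) (hf : IsHom K L f) : IsHom K M (g ∘ₗ f) where
  map_proj i y := by simp [hf.map_proj, hg.map_proj]
  map_d y := by simp [hf.map_d, hg.map_d]
  map_e k y := by simp [hf.map_e, hg.map_e]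

lemma isHom_id (K : KoszulDGModule x X) : IsHom K K LinearMap.id :=
  ⟨fun _ _ => rfl, fun _ => rfl, fun _ _ => rfl⟩

/-- A module killed by the elements `x k`, as a dg-module concentrated in degree `0`. -/
noncomputable def concentrated (x : Fin n → S) (hX : ∀ k, ∀ y : X, x k • y = 0) :
    KoszulDGModule x X where
  toGrading := Grading.concentrated S X
  d := 0
  e _ := 0
  d_d _ := rfl
  proj_d _ _ := by simp
  proj_e _ _ _ := by simp
  e_e_self _ _ := rfl
  e_anticomm _ _ _ := by simp
  d_e k y := by simp [hX k y]

/-- The mapping cone of a morphism. -/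
noncomputable def cone {K : KoszulDGModule x X} {L : KoszulDGModule x Y} {g : Y →ₗ[S] X}
    (hg : IsHom L K g) : KoszulDGModule x (X × Y) where
  toGrading := K.toGrading.prodShift L.toGrading
  d := (K.d.coprod g).prod (-(L.d ∘ₗ LinearMap.snd S X Y))
  e k := (K.e k).prodMap (-L.e k)
  d_d y := by ext <;> simp [K.d_d, L.d_d, hg.map_d]
  proj_d i y := by ext <;> simp [Grading.prodShift, K.proj_d, L.proj_d, hg.map_proj]
  proj_e k i y := by ext <;> simp [Grading.prodShift, K.proj_e, L.proj_e]
  e_e_self k y := by ext <;> simp [K.e_e_self, L.e_e_self]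
  e_anticomm k l y := by
    refine Prod.ext ?_ ?_
    · simp [K.e_anticomm k l]
    · simp [L.e_anticomm k l]
  d_e k y := by
    refine Prod.ext ?_ ?_
    · simp only [LinearMap.prodMap_apply, LinearMap.prod_apply, Function.prod,
        LinearMap.coprod_apply, LinearMap.neg_apply, map_neg, K.d_e, hg.map_e, Prod.fst_sub,
        Prod.smul_fst, map_add]
      abel
    · simp [L.d_e]

lemma isHom_smul_id (K : KoszulDGModule x X) (s : S) : IsHom K K (s • LinearMap.id) where
  map_proj i y := by simp
  map_d y := by simp
  map_e k y := by simp

/-- The induced dg-module over the Koszul complex of `x'`, that is the cone of multiplication by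
`x' 0`; the new homotopy `e 0` is the inclusion of the first summand into the second. -/
noncomputable def induced (K : KoszulDGModule (Fin.tail x') X) : KoszulDGModule x' (X × X) where
  toGrading := K.toGrading.prodShift K.toGrading
  d := (cone (K.isHom_smul_id (x' 0))).d
  e := Fin.cons (LinearMap.prod 0 (LinearMap.fst S X X)) (cone (K.isHom_smul_id (x' 0))).e
  d_d := (cone (K.isHom_smul_id (x' 0))).d_d
  proj_d := (cone (K.isHom_smul_id (x' 0))).proj_d
  proj_e k i y := by
    cases k using Fin.cases with
    | zero => simp [Grading.prodShift]
    | succ k => exact (cone (K.isHom_smul_id (x' 0))).proj_e k i y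
  e_e_self k y := by
    cases k using Fin.cases with
    | zero => simp
    | succ k => exact (cone (K.isHom_smul_id (x' 0))).e_e_self k y
  e_anticomm k l y := by
    cases k using Fin.cases with
    | zero => cases l using Fin.cases <;> simp [cone]
    | succ k =>
      cases l using Fin.cases with
      | zero => simp [cone]
      | succ l => exact (cone (K.isHom_smul_id (x' 0))).e_anticomm k l y
  d_e k y := by
    cases k using Fin.cases with
    | zero => ext <;> simp [cone]
    | succ k => exact (cone (K.isHom_smul_id (x' 0))).d_e k y

lemma IsHom.induced {K : KoszulDGModule (Fin.tail x') X} {L : KoszulDGModule x' Y}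
    {f : X →ₗ[S] Y} (hf : IsHom K L.tail f) : IsHom K.induced L (f.coprod (L.e 0 ∘ₗ f)) where
  map_proj i y := by
    have hp := fun i y => hf.map_proj i y
    simp only [tail] at hp
    simp [KoszulDGModule.induced, Grading.prodShift, hp, L.proj_e]
  map_d y := by
    have hd := fun y => hf.map_d y
    simp only [tail] at hd
    simp only [KoszulDGModule.induced, cone, LinearMap.prod_apply, Function.prod,
      LinearMap.coprod_apply, LinearMap.comp_apply, LinearMap.smul_apply, LinearMap.id_apply,
      LinearMap.neg_apply, LinearMap.snd_apply, map_add, map_neg, map_smul, hd, L.d_e]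
    abel
  map_e k y := by
    cases k using Fin.cases with
    | zero => simp [KoszulDGModule.induced, L.e_e_self]
    | succ k =>
      have he := fun y => hf.map_e k y
      simp only [tail] at he
      simp [KoszulDGModule.induced, cone, he, L.e_anticomm 0 k.succ]

/-- A finite sum of complexes of the form `Y` in degree `0`, respectively `Y → Y` in degrees
`k + 1` and `k`, where `k < L`. -/
noncomputable def disks (x : Fin 0 → S) (Y : Type*) [AddCommGroup Y] [Module S Y] (L : ℕ) :
    KoszulDGModule x (Fin (L + 1) ⊕ Fin L → Y) where
  toGrading := Grading.pi (Sum.elim (fun k => (k : ℕ)) fun k => (k : ℕ))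
  d := LinearMap.pi (Sum.elim 0 fun k => LinearMap.proj (Sum.inl k.succ))
  e k := k.elim0
  d_d y := by ext (_ | _) <;> simp
  proj_d i y := by
    ext (k | k) <;> by_cases h : ((k : ℕ) : ℤ) = i <;> simp [Grading.pi_proj_apply, h]
  proj_e k := k.elim0
  e_e_self k := k.elim0
  e_anticomm k := k.elim0
  d_e k := k.elim0

/-- The morphism from `disks` which on the summands `Y` in degree `k` and `Y → Y` in degrees `k + 1`
and `k` is induced by the degree `k`, respectively `k + 1`, component of `π`. -/
noncomputable def fromDisks {x : Fin 0 → S} (K : KoszulDGModule x X) (π : Y →ₗ[S] X) (L : ℕ) :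
    (Fin (L + 1) ⊕ Fin L → Y) →ₗ[S] X :=
  LinearMap.lsum S (fun _ => Y) S (Sum.elim (fun k => K.proj (k : ℕ) ∘ₗ π)
    fun k => K.d ∘ₗ K.proj ((k : ℕ) + 1) ∘ₗ π)

lemma fromDisks_apply {x : Fin 0 → S} (K : KoszulDGModule x X) (π : Y →ₗ[S] X) (L : ℕ)
    (v : Fin (L + 1) ⊕ Fin L → Y) :
    K.fromDisks π L v = ∑ k : Fin (L + 1), K.proj (k : ℕ) (π (v (Sum.inl k))) +
      ∑ k : Fin L, K.d (K.proj ((k : ℕ) + 1) (π (v (Sum.inr k)))) := by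
  simp [fromDisks, LinearMap.lsum_apply]

lemma isHom_fromDisks {x : Fin 0 → S} (K : KoszulDGModule x X) (π : Y →ₗ[S] X) (L : ℕ) :
    IsHom (disks x Y L) K (K.fromDisks π L) where
  map_proj i v := by
    simp only [fromDisks_apply, disks, Grading.pi_proj_apply, Sum.elim_inl, Sum.elim_inr, map_add,
      map_sum, K.proj_d, K.proj_proj]
    congr 1 <;> refine Finset.sum_congr rfl fun k _ => ?_
    · by_cases h : ((k : ℕ) : ℤ) = i
      · simp [h]
      · simp [h, Ne.symm h]
    · by_cases h : ((k : ℕ) : ℤ) = i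
      · simp [h]
      · simp [h, Ne.symm h]
  map_d v := by
    simp [fromDisks_apply, disks, K.d_d, Fin.sum_univ_succ, K.d_proj_zero]
  map_e k := k.elim0

lemma fromDisks_surjective {x : Fin 0 → S} (K : KoszulDGModule x X) {π : Y →ₗ[S] X}
    (hπ : Function.Surjective π) {L : ℕ} (hL : ∀ i : ℤ, L ≤ i → K.proj i = 0) :
    Function.Surjective (K.fromDisks π L) := by
  intro y
  obtain ⟨v, rfl⟩ := hπ y
  refine ⟨Sum.elim (fun _ => v) 0, ?_⟩
  have hsum := K.toGrading.sum_proj (y := π v)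
    (s := (Finset.range (L + 1)).map ⟨_, Nat.cast_injective⟩) fun i hi => by
      rcases lt_or_ge i 0 with h | h
      · exact K.proj_of_neg _ _ h
      · refine LinearMap.congr_fun (hL i (not_lt.1 fun h' => hi ?_)) _
        simpa using ⟨i.toNat, by omega, by simpa using h⟩
  simpa [fromDisks_apply, Finset.sum_range] using hsum

/-- A surjective morphism with acyclic kernel. -/
structure IsTrivialFibration (K : KoszulDGModule x X) (L : KoszulDGModule x Y)
    (f : X →ₗ[S] Y) : Prop extends IsHom K L f where
  surjective : Function.Surjective f
  exact : ∀ z, K.d z = 0 → f z = 0 → ∃ w, f w = 0 ∧ K.d w = z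

lemma isTrivialFibration_id (K : KoszulDGModule x X) : IsTrivialFibration K K LinearMap.id where
  toIsHom := K.isHom_id
  surjective := Function.surjective_id
  exact z _ hz := ⟨0, rfl, by rw [map_zero, ← hz, LinearMap.id_apply]⟩

lemma isTrivialFibration_cone {Z : Type*} [AddCommGroup Z] [Module S Z] {K : KoszulDGModule x X}
    {L : KoszulDGModule x Y} {f : X →ₗ[S] Y} (hf : IsHom K L f) (hsurj : Function.Surjective f)
    {M : KoszulDGModule x Z} {g : Z →ₗ[S] LinearMap.ker f} (hg : IsTrivialFibration M (ker hf) g) :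
    IsTrivialFibration (cone ((isHom_subtype_ker hf).comp hg.toIsHom)) L
      (f ∘ₗ LinearMap.fst S X Z) where
  map_proj i y := by simp [cone, Grading.prodShift, hf.map_proj]
  map_d y := by simp [cone, hf.map_d]
  map_e k y := by simp [cone, hf.map_e]
  surjective := hsurj.comp LinearMap.fst_surjective
  exact := by
    rintro ⟨a, b⟩ hd ha
    have hda : K.d a + (g b : X) = 0 := congrArg Prod.fst hd
    have hdb : M.d b = 0 := neg_eq_zero.1 (congrArg Prod.snd hd)
    obtain ⟨b₀, hb₀⟩ := hg.surjective ⟨a, ha⟩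
    have hcycle : M.d (b + M.d b₀) = 0 := by rw [map_add, M.d_d, hdb, add_zero]
    have hker : g (b + M.d b₀) = 0 := by
      rw [map_add, hg.map_d, hb₀, add_comm]
      exact Subtype.ext hda
    obtain ⟨w, hw, hdw⟩ := hg.exact _ hcycle hker
    refine ⟨(0, b₀ - w), by simp, Prod.ext ?_ ?_⟩
    · simp [cone, hb₀, hw]
    · simp [cone, hdw]

end KoszulDGModule

section Resolutions

variable {S : Type u} [CommRing S]

lemma KoszulDGModule.exists_projective_cover {n : ℕ} {x : Fin n → S} {X : Type v} [AddCommGroup X]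
    [Module S X] [Module.Finite S X] (K : KoszulDGModule x X) :
    ∃ (P : Type u) (_ : AddCommGroup P) (_ : Module S P) (_ : Module.Finite S P)
      (_ : Module.Projective S P) (L : KoszulDGModule x P) (f : P →ₗ[S] X),
      Function.Surjective f ∧ IsHom L K f := by
  induction n with
  | zero =>
    obtain ⟨N, hN⟩ := K.toGrading.exists_forall_proj_eq_zero
    obtain ⟨r, π, hπ⟩ := Module.Finite.exists_fin' S X
    exact ⟨_, inferInstance, inferInstance, inferInstance, inferInstance, disks x (Fin r → S) N,
      K.fromDisks π N, K.fromDisks_surjective hπ hN, K.isHom_fromDisks π N⟩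
  | succ n ih =>
    obtain ⟨P, _, _, _, _, L, f, hf, hom⟩ := ih K.tail
    exact ⟨P × P, inferInstance, inferInstance, inferInstance, inferInstance, L.induced,
      f.coprod (K.e 0 ∘ₗ f), fun y => (hf y).imp' (fun z => (z, 0)) (by simp), hom.induced⟩

theorem KoszulDGModule.exists_projective_resolution [IsNoetherianRing S] {n : ℕ} {x : Fin n → S}
    {X : Type u} [AddCommGroup X] [Module S X] [Module.Finite S X] (K : KoszulDGModule x X) {m : ℕ}
    (hX : HasProjectiveDimensionLT (ModuleCat.of S X) (m + 1)) :
    ∃ (P : Type u) (_ : AddCommGroup P) (_ : Module S P) (_ : Module.Finite S P)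
      (_ : Module.Projective S P) (L : KoszulDGModule x P) (f : P →ₗ[S] X),
      IsTrivialFibration L K f := by
  induction m generalizing X with
  | zero =>
    have hproj : Module.Projective S X :=
      (IsProjective.iff_projective X).2 (projective_iff_hasProjectiveDimensionLT_one.2 hX)
    exact ⟨X, inferInstance, inferInstance, inferInstance, hproj, K, LinearMap.id,
      K.isTrivialFibration_id⟩
  | succ m ih =>
    obtain ⟨P, _, _, _, _, L, f, hsurj, hf⟩ := K.exists_projective_cover
    have hP : Projective (ModuleCat.of S P) := (IsProjective.iff_projective P).1 inferInstance
    have hses := LinearMap.shortExact_shortComplexKer hsurj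
    have hker := (hses.hasProjectiveDimensionLT_X₃_iff m hP).1 hX
    obtain ⟨G, _, _, _, _, M, g, hg⟩ := ih (ker hf) hker
    exact ⟨P × G, inferInstance, inferInstance, inferInstance, inferInstance, _, _,
      isTrivialFibration_cone hf hsurj hg⟩

end Resolutions

end KoszulDGModules

section Shamash

section QuotSMulTop

variable {S X Y : Type*} [CommRing S] [AddCommGroup X] [Module S X] [AddCommGroup Y] [Module S Y]

/-- The factorization through `X / rX` of a linear map into a module killed by `r`. -/
noncomputable def quotSMulTopLift (r : S) (f : X →ₗ[S] Y) (hr : ∀ y : Y, r • y = 0) :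
    QuotSMulTop r X →ₗ[S] Y :=
  Submodule.liftQ _ f fun y hy => by
    obtain ⟨w, -, rfl⟩ := (Submodule.mem_smul_pointwise_iff_exists y r ⊤).1 hy
    rw [LinearMap.mem_ker, map_smul, hr]

@[simp] lemma quotSMulTopLift_mk (r : S) (f : X →ₗ[S] Y) (hr : ∀ y : Y, r • y = 0) (y : X) :
    quotSMulTopLift r f hr (Submodule.Quotient.mk y) = f y :=
  rfl

lemma smul_quotSMulTop_eq_zero (r : S) (q : QuotSMulTop r X) : r • q = 0 :=
  Module.mem_annihilator.1 (QuotSMulTop.mem_annihilator X r) q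

lemma mk_quotSMulTop_eq_zero_iff {r : S} {y : X} :
    (Submodule.Quotient.mk y : QuotSMulTop r X) = 0 ↔ ∃ w, y = r • w := by
  rw [Submodule.Quotient.mk_eq_zero]
  simp [Submodule.mem_smul_pointwise_iff_exists, eq_comm]

end QuotSMulTop

namespace KoszulDGModule

variable {S X Y : Type*} [CommRing S] [AddCommGroup X] [Module S X] [AddCommGroup Y] [Module S Y]
variable {n : ℕ} {x : Fin n → S} {x' : Fin (n + 1) → S}

/-- The reduction of a dg-module modulo `r`. -/
noncomputable def quotSMulTop (K : KoszulDGModule x X) (r : S) :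
    KoszulDGModule x (QuotSMulTop r X) where
  toGrading := K.toGrading.quotSMulTop r
  d := QuotSMulTop.map r K.d
  e k := QuotSMulTop.map r (K.e k)
  d_d q := by
    induction q using Submodule.Quotient.induction_on with | _ y
    simp [K.d_d]
  proj_d i q := by
    induction q using Submodule.Quotient.induction_on with | _ y
    simp [Grading.quotSMulTop, K.proj_d]
  proj_e k i q := by
    induction q using Submodule.Quotient.induction_on with | _ y
    simp [Grading.quotSMulTop, K.proj_e]
  e_e_self k q := by
    induction q using Submodule.Quotient.induction_on with | _ y
    simp [K.e_e_self]
  e_anticomm k l q := by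
    induction q using Submodule.Quotient.induction_on with | _ y
    simp [K.e_anticomm k l]
  d_e k q := by
    induction q using Submodule.Quotient.induction_on with | _ y
    simp [K.d_e]

/-- If `x' 0` kills `X`, then `d` and the homotopy `e 0` are anticommuting differentials. They are
combined into the differential `d + shift ∘ e 0` of the divided power extension `ℕ →₀ X`. -/
noncomputable def dividedPowers (K : KoszulDGModule x' X) (hX : ∀ y : X, x' 0 • y = 0) :
    KoszulDGModule (Fin.tail x') (ℕ →₀ X) where
  toGrading := K.toGrading.finsupp
  d := coordwiseMap (fun _ => K.d) +
    Finsupp.lcomapDomain Nat.succ Nat.succ_injective ∘ₗ coordwiseMap fun _ => K.e 0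
  e k := coordwiseMap fun _ => K.e k.succ
  d_d y := by
    ext k
    simp [coordwiseMap_apply, K.d_d, K.e_e_self, K.d_e, hX]
  proj_d i y := by
    ext k
    simp only [Grading.finsupp, LinearMap.add_apply, LinearMap.comp_apply,
      Finsupp.lcomapDomain_apply, Finsupp.add_apply, Finsupp.comapDomain_apply, coordwiseMap_apply,
      map_add, K.proj_d, K.proj_e, Nat.succ_eq_add_one, Nat.cast_add, Nat.cast_one]
    ring_nf
  proj_e k i y := by
    ext l
    simp only [Grading.finsupp, coordwiseMap_apply, K.proj_e]
    ring_nf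
  e_e_self k y := by
    ext l
    simp [coordwiseMap_apply, K.e_e_self]
  e_anticomm k l y := by
    ext j
    simp [coordwiseMap_apply, K.e_anticomm k.succ l.succ]
  d_e k y := by
    ext j
    simp only [LinearMap.add_apply, LinearMap.comp_apply, Finsupp.lcomapDomain_apply, Fin.tail,
      Finsupp.add_apply, Finsupp.comapDomain_apply, Finsupp.sub_apply, Finsupp.smul_apply,
      coordwiseMap_apply, map_add, K.d_e, K.e_anticomm 0 k.succ]
    abel

/-- Shamash's construction: a dg-module over the Koszul complex of `x'` is turned into one over the
Koszul complex of `Fin.tail x'` whose underlying module is killed by `x' 0`. -/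
noncomputable def shamash (K : KoszulDGModule x' X) :
    KoszulDGModule (Fin.tail x') (ℕ →₀ QuotSMulTop (x' 0) X) :=
  (K.quotSMulTop (x' 0)).dividedPowers (smul_quotSMulTop_eq_zero (x' 0))

lemma shamash_d_apply (K : KoszulDGModule x' X) (z : ℕ →₀ QuotSMulTop (x' 0) X) (k : ℕ) :
    K.shamash.d z k = QuotSMulTop.map (x' 0) K.d (z k) +
      QuotSMulTop.map (x' 0) (K.e 0) (z (k + 1)) := by
  simp [shamash, dividedPowers, quotSMulTop, coordwiseMap_apply]

lemma shamash_d_single_zero (K : KoszulDGModule x' X) (y : X) :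
    K.shamash.d (Finsupp.single 0 (Submodule.Quotient.mk y)) =
      Finsupp.single 0 (Submodule.Quotient.mk (K.d y)) := by
  ext k
  cases k <;> simp [shamash_d_apply]

lemma shamash_d_single_succ (K : KoszulDGModule x' X) (y : X) (j : ℕ) :
    K.shamash.d (Finsupp.single (j + 1) (Submodule.Quotient.mk y)) =
      Finsupp.single (j + 1) (Submodule.Quotient.mk (K.d y)) +
        Finsupp.single j (Submodule.Quotient.mk (K.e 0 y)) := by
  ext k
  simp only [shamash_d_apply, Finsupp.add_apply, Finsupp.single_apply, add_left_inj]
  congr 1 <;> split_ifs <;> simp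

lemma shamash_e_apply (K : KoszulDGModule x' X) (k : Fin n) (z : ℕ →₀ QuotSMulTop (x' 0) X)
    (j : ℕ) : K.shamash.e k z j = QuotSMulTop.map (x' 0) (K.e k.succ) (z j) :=
  coordwiseMap_apply _ _ _

lemma shamash_proj_apply (K : KoszulDGModule x' X) (i : ℤ) (z : ℕ →₀ QuotSMulTop (x' 0) X)
    (j : ℕ) : K.shamash.proj i z j = QuotSMulTop.map (x' 0) (K.proj (i - 2 * j)) (z j) :=
  coordwiseMap_apply _ _ _

lemma shamash_e_single (K : KoszulDGModule x' X) (k : Fin n) (y : X) (j : ℕ) :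
    K.shamash.e k (Finsupp.single j (Submodule.Quotient.mk y)) =
      Finsupp.single j (Submodule.Quotient.mk (K.e k.succ y)) :=
  coordwiseMap_single _ _ _

lemma shamash_proj_single (K : KoszulDGModule x' X) (i : ℤ) (y : X) (j : ℕ) :
    K.shamash.proj i (Finsupp.single j (Submodule.Quotient.mk y)) =
      Finsupp.single j (Submodule.Quotient.mk (K.proj (i - 2 * j) y)) :=
  coordwiseMap_single _ _ _

section Resolution

variable {f : X →ₗ[S] Y} {hY : ∀ k, ∀ y : Y, x k • y = 0}

lemma IsHom.apply_d {K : KoszulDGModule x X} (hf : IsHom K (concentrated x hY) f) (y : X) :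
    f (K.d y) = 0 :=
  hf.map_d y

lemma IsHom.apply_e {K : KoszulDGModule x X} (hf : IsHom K (concentrated x hY) f) (k : Fin n)
    (y : X) : f (K.e k y) = 0 :=
  hf.map_e k y

lemma IsHom.apply_proj {K : KoszulDGModule x X} (hf : IsHom K (concentrated x hY) f) (i : ℤ)
    (y : X) : f (K.proj i y) = if i = 0 then f y else 0 := by
  rw [hf.map_proj]
  by_cases h : i = 0 <;> simp [concentrated, Grading.concentrated, h]

lemma IsHom.isTrivialFibration {K : KoszulDGModule x X} (hf : IsHom K (concentrated x hY) f)
    (hsurj : Function.Surjective f) (hexact : ∀ z, K.d z = 0 → f z = 0 → ∃ w, K.d w = z) :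
    IsTrivialFibration K (concentrated x hY) f where
  toIsHom := hf
  surjective := hsurj
  exact z hdz hfz := by
    obtain ⟨w, rfl⟩ := hexact z hdz hfz
    exact ⟨w - K.proj 0 w, by simp [hf.apply_proj], by simp [K.d_proj_zero]⟩

end Resolution

section Exactness

variable {K : KoszulDGModule x' X} {f : X →ₗ[S] Y} {hY : ∀ k, ∀ y : Y, x' k • y = 0}

lemma d_eq_zero_of_d_eq_smul (K : KoszulDGModule x X) {r : S} (hr : IsSMulRegular X r) {a w : X}
    (h : K.d a = r • w) : K.d w = 0 :=
  hr (by simp only [smul_zero, ← map_smul, ← h, K.d_d])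

lemma eq_d_add_e_of_d_eq_smul (K : KoszulDGModule x' X) (hr : IsSMulRegular X (x' 0))
    {a b v w : X} (ha : K.d a = x' 0 • w) (hb : K.d b + K.e 0 a = x' 0 • v) :
    a = K.d v + K.e 0 w := by
  refine hr ?_
  have h := congrArg K.d hb
  simp only [map_add, K.d_d, zero_add, K.d_e, ha, map_smul] at h
  simp only [smul_add, ← h]
  abel

lemma IsTrivialFibration.exists_eq_d_add_e (hf : IsTrivialFibration K (concentrated x' hY) f)
    (hr : IsSMulRegular X (x' 0)) {a w : X} (ha : K.d a = x' 0 • w) (hfa : f a = 0) :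
    ∃ u, a = K.d u + K.e 0 w := by
  obtain ⟨u, -, hu⟩ := hf.exact (a - K.e 0 w)
    (by rw [map_sub, K.d_e, K.d_eq_zero_of_d_eq_smul hr ha, map_zero, ha, sub_zero, sub_self])
    (by rw [map_sub, hf.apply_e, hfa, sub_zero])
  exact ⟨u, by rw [hu, sub_add_cancel]⟩

/-- The map from `ℕ →₀ X / x₀X` to a module killed by `x₀` that extends `f` on the `0`-th
coordinate and is zero on all other ones. -/
noncomputable def shamashMap (r : S) (f : X →ₗ[S] Y) (hr : ∀ y : Y, r • y = 0) :
    (ℕ →₀ QuotSMulTop r X) →ₗ[S] Y :=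
  quotSMulTopLift r f hr ∘ₗ Finsupp.lapply 0

lemma shamashMap_apply {r : S} (f : X →ₗ[S] Y) (hr : ∀ y : Y, r • y = 0)
    {z : ℕ →₀ QuotSMulTop r X} {y : X} (hy : z 0 = Submodule.Quotient.mk y) :
    shamashMap r f hr z = f y := by
  simp [shamashMap, hy]

lemma IsHom.shamash (hf : IsHom K (concentrated x' hY) f) :
    IsHom K.shamash (concentrated (Fin.tail x') fun k => hY k.succ)
      (shamashMap (x' 0) f (hY 0)) where
  map_proj i z := by
    obtain ⟨a, ha⟩ := Submodule.Quotient.mk_surjective _ (z 0)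
    rw [shamashMap_apply f (hY 0) (y := K.proj i a) (by simp [shamash_proj_apply, ← ha]),
      shamashMap_apply f (hY 0) ha.symm, hf.map_proj]
    rfl
  map_d z := by
    obtain ⟨a, ha⟩ := Submodule.Quotient.mk_surjective _ (z 0)
    obtain ⟨b, hb⟩ := Submodule.Quotient.mk_surjective _ (z 1)
    rw [shamashMap_apply f (hY 0) (y := K.d a + K.e 0 b) (by simp [shamash_d_apply, ← ha, ← hb]),
      map_add, hf.apply_d, hf.apply_e, add_zero]
    rfl
  map_e k z := by
    obtain ⟨a, ha⟩ := Submodule.Quotient.mk_surjective _ (z 0)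
    rw [shamashMap_apply f (hY 0) (y := K.e k.succ a) (by simp [shamash_e_apply, ← ha]),
      hf.apply_e]
    rfl

lemma IsTrivialFibration.exists_shamash_d_apply_eq
    (hf : IsTrivialFibration K (concentrated x' hY) f) (hr : IsSMulRegular X (x' 0)) {N : ℕ}
    {z : ℕ →₀ QuotSMulTop (x' 0) X} (hz : ∀ k > N, z k = 0) (hdz : K.shamash.d z = 0)
    (hfz : shamashMap (x' 0) f (hY 0) z = 0) : ∃ t, ∀ k ≥ N, K.shamash.d t k = z k := by
  have hdz' : ∀ k, QuotSMulTop.map (x' 0) K.d (z k) +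
      QuotSMulTop.map (x' 0) (K.e 0) (z (k + 1)) = 0 := fun k => by
    rw [← shamash_d_apply, hdz, Finsupp.zero_apply]
  obtain ⟨a, ha⟩ := Submodule.Quotient.mk_surjective _ (z N)
  obtain ⟨w, hw⟩ : ∃ w, K.d a = x' 0 • w := by
    rw [← mk_quotSMulTop_eq_zero_iff]
    simpa [hz (N + 1) (by omega), ← ha] using hdz' N
  obtain ⟨u, hu⟩ : ∃ u, a = K.d u + K.e 0 w := by
    cases N with
    | zero => exact hf.exists_eq_d_add_e hr hw (by rwa [← shamashMap_apply f (hY 0) ha.symm])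
    | succ N =>
      obtain ⟨b, hb⟩ := Submodule.Quotient.mk_surjective _ (z N)
      obtain ⟨v, hv⟩ : ∃ v, K.d b + K.e 0 a = x' 0 • v := by
        rw [← mk_quotSMulTop_eq_zero_iff]
        simpa [← ha, ← hb] using hdz' N
      exact ⟨v, K.eq_d_add_e_of_d_eq_smul hr hw hv⟩
  refine ⟨Finsupp.single N (Submodule.Quotient.mk u) +
    Finsupp.single (N + 1) (Submodule.Quotient.mk w), fun k hk => ?_⟩
  rw [shamash_d_apply]
  obtain rfl | hk := hk.eq_or_lt
  · simp [← ha, hu]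
  · by_cases hk' : N + 1 = k <;>
      simp [hz k hk, hk.ne, hk', show N ≠ k + 1 by omega,
        K.d_eq_zero_of_d_eq_smul hr hw]

theorem IsTrivialFibration.shamash (hf : IsTrivialFibration K (concentrated x' hY) f)
    (hr : IsSMulRegular X (x' 0)) :
    IsTrivialFibration K.shamash (concentrated (Fin.tail x') fun k => hY k.succ)
      (shamashMap (x' 0) f (hY 0)) := by
  have hom := hf.toIsHom.shamash
  refine hom.isTrivialFibration (fun y => ?_) fun z hdz hfz => ?_
  · obtain ⟨v, rfl⟩ := hf.surjective y
    exact ⟨Finsupp.single 0 (Submodule.Quotient.mk v), shamashMap_apply f (hY 0) (by simp)⟩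
  · obtain ⟨N, hN⟩ : ∃ N, ∀ k ≥ N, z k = 0 := by
      obtain ⟨b, hb⟩ := z.support.finite_toSet.bddAbove
      exact ⟨b + 1, fun k hk => by_contra fun h => absurd (hb (Finsupp.mem_support_iff.2 h))
        (by omega)⟩
    induction N generalizing z with
    | zero => exact ⟨0, by ext k; simp [hN k]⟩
    | succ N ih =>
      obtain ⟨t, ht⟩ := hf.exists_shamash_d_apply_eq hr (fun k hk => hN k hk) hdz hfz
      obtain ⟨w, hw⟩ := ih (z - K.shamash.d t) (by rw [map_sub, K.shamash.d_d, hdz, sub_zero])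
        (by rw [map_sub, hom.apply_d, hfz, sub_zero])
        fun k hk => by rw [Finsupp.sub_apply, ht k hk, sub_self]
      exact ⟨w + t, by rw [map_add, hw, sub_add_cancel]⟩

end Exactness

end KoszulDGModule

section RelativelyProjective

variable {S : Type*} [CommRing S]

lemma isWeaklyRegular_finsupp {X : Type*} [AddCommGroup X] [Module S X]
    {rs : List S} (h : RingTheory.Sequence.IsWeaklyRegular X rs) :
    RingTheory.Sequence.IsWeaklyRegular (ℕ →₀ X) rs :=
  ((TensorProduct.finsuppScalarLeft S X ℕ).isWeaklyRegular_congr rs).1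
    (h.isWeaklyRegular_lTensor (M₂ := ℕ →₀ S))

/-- Projectivity relative to the `S`-modules killed by a set `T`: linear maps lift along surjections
between such modules. For `F` itself killed by `T` this is projectivity over `S ⧸ Ideal.span T`. -/
def IsRelativelyProjective (T : Set S) (F : Type v) [AddCommGroup F] [Module S F] : Prop :=
  ∀ (U V : Type v) [AddCommGroup U] [Module S U] [AddCommGroup V] [Module S V],
    (∀ t ∈ T, ∀ y : U, t • y = 0) → (∀ t ∈ T, ∀ y : V, t • y = 0) →
    ∀ g : U →ₗ[S] V, Function.Surjective g → ∀ φ : F →ₗ[S] V, ∃ ψ : F →ₗ[S] U, g ∘ₗ ψ = φ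

variable {T : Set S} {F : Type v} [AddCommGroup F] [Module S F]

lemma IsRelativelyProjective.finsupp_quotSMulTop (hF : IsRelativelyProjective T F) (r : S) :
    IsRelativelyProjective (insert r T) (ℕ →₀ QuotSMulTop r F) := by
  intro U V _ _ _ _ hU hV g hg φ
  choose ψ hψ using fun j : ℕ => hF U V (fun t ht => hU t (.inr ht)) (fun t ht => hV t (.inr ht))
    g hg (φ ∘ₗ Finsupp.lsingle j ∘ₗ Submodule.mkQ _)
  refine ⟨Finsupp.lsum S fun j => quotSMulTopLift r (ψ j) (hU r (.inl rfl)), ?_⟩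
  ext j y
  simpa using LinearMap.congr_fun (hψ j) y

lemma smul_finsupp_quotSMulTop_eq_zero (hF : ∀ t ∈ T, ∀ y : F, t • y = 0) (r : S) :
    ∀ t ∈ insert r T, ∀ z : ℕ →₀ QuotSMulTop r F, t • z = 0 := by
  intro t ht z
  ext j
  rw [Finsupp.smul_apply, Finsupp.zero_apply]
  obtain ⟨y, hy⟩ := Submodule.Quotient.mk_surjective _ (z j)
  rcases ht with rfl | ht
  · exact smul_quotSMulTop_eq_zero t _
  · rw [← hy, ← Submodule.Quotient.mk_smul, hF t ht, Submodule.Quotient.mk_zero]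

end RelativelyProjective

end Shamash

section PolynomialModule

open Polynomial

variable {S R C : Type*} [CommRing S] [CommRing R] [AddCommGroup C] [Module R C]

/-- The `R[X]`-linear extension of an `R`-linear endomorphism. -/
noncomputable def polynomialModuleMap (f : C →ₗ[R] C) :
    PolynomialModule R C →ₗ[R[X]] PolynomialModule R C where
  toFun := PolynomialModule.map R f
  map_add' := map_add _
  map_smul' r c := by simp [PolynomialModule.map_smul]

lemma polynomialModuleMap_coeff (f : C →ₗ[R] C) (c : PolynomialModule R C) (k : ℕ) :
    (polynomialModuleMap f c).coeff k = f (c.coeff k) :=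
  rfl

lemma polynomialModuleMap_single (f : C →ₗ[R] C) (k : ℕ) (c : C) :
    polynomialModuleMap f (PolynomialModule.single R k c) = PolynomialModule.single R k (f c) :=
  PolynomialModule.map_single R f k c

lemma polynomialModule_coeff_sub (c c' : PolynomialModule R C) :
    (c - c').coeff = c.coeff - c'.coeff :=
  rfl

lemma coeff_X_smul_zero (c : PolynomialModule R C) : ((X : R[X]) • c).coeff 0 = 0 := by
  rw [← monomial_one_one_eq_X, PolynomialModule.monomial_smul_apply]
  simp

lemma coeff_X_smul_succ (c : PolynomialModule R C) (k : ℕ) :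
    ((X : R[X]) • c).coeff (k + 1) = c.coeff k := by
  rw [← monomial_one_one_eq_X, PolynomialModule.monomial_smul_apply]
  simp

lemma coeff_C_smul (r : R) (c : PolynomialModule R C) (k : ℕ) :
    ((Polynomial.C r : R[X]) • c).coeff k = r • c.coeff k := by
  rw [← monomial_zero_left, PolynomialModule.monomial_smul_apply]
  simp

lemma polynomialModule_X_smul_injective :
    Function.Injective fun c : PolynomialModule R C => (X : R[X]) • c := fun c c' h => by
  ext k
  rw [← coeff_X_smul_succ c, ← coeff_X_smul_succ c']
  exact congrArg (fun p => p.coeff (k + 1)) h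

lemma polynomialModule_exists_eq_X_smul (c : PolynomialModule R C) (h : c.coeff 0 = 0) :
    ∃ w, c = (X : R[X]) • w := by
  refine ⟨PolynomialModule.ofCoeff R
    (Finsupp.comapDomain Nat.succ c.coeff Nat.succ_injective.injOn), ?_⟩
  ext k
  cases k with
  | zero => rw [coeff_X_smul_zero, h]
  | succ k => rw [coeff_X_smul_succ]; rfl

instance [Module.Finite R C] : Module.Finite R[X] (PolynomialModule R C) :=
  Module.Finite.equiv (PolynomialModule.polynomialTensorProductLEquivPolynomialModule R C)

/-- The coefficientwise application of a sequence of linear maps. -/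
noncomputable def coeffwiseMap [Algebra S R] [Module S C] [IsScalarTower S R C]
    (T : ℕ → C →ₗ[S] C) : PolynomialModule R C →ₗ[S] PolynomialModule R C :=
  (PolynomialModule.coeffLinearEquiv R S).symm.toLinearMap ∘ₗ coordwiseMap T ∘ₗ
    (PolynomialModule.coeffLinearEquiv R S).toLinearMap

lemma coeffwiseMap_coeff [Algebra S R] [Module S C] [IsScalarTower S R C]
    (T : ℕ → C →ₗ[S] C) (c : PolynomialModule R C) (k : ℕ) :
    (coeffwiseMap T c).coeff k = T k (c.coeff k) :=
  coordwiseMap_apply _ _ _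

lemma adjoin_image_C_union_X [Algebra S R] {s : Set R} (hs : Algebra.adjoin S s = ⊤) :
    Algebra.adjoin S (Polynomial.C '' s ∪ {X}) = (⊤ : Subalgebra S R[X]) := by
  have h := Algebra.adjoin_eq_adjoin_union S s {(X : R[X])} hs
  rw [adjoin_X, Subalgebra.restrictScalars_top] at h
  exact h.symm

end PolynomialModule

section GradedDual

open Polynomial

/-- A model `C` of the graded dual `Hom(X, N)` of a dg-module `K` over the Koszul complex, on which
a polynomial ring `R` acts by cohomology operators `gens` of degree `2`. The maps `d` and `e` are
the transposes of those of `K`, without signs. -/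
structure GradedDual {S : Type*} [CommRing S] {n : ℕ} {x : Fin n → S} {X : Type*} [AddCommGroup X]
    [Module S X] (K : KoszulDGModule x X) (N R C : Type*) [AddCommGroup N] [Module S N]
    [CommRing R] [Algebra S R] [AddCommGroup C] [Module S C] [Module R C]
    [IsScalarTower S R C] where
  gens : Set R
  adjoin_gens : Algebra.adjoin S gens = ⊤
  proj : ℤ → C →ₗ[S] C
  d : C →ₗ[R] C
  e : Fin n → C →ₗ[R] C
  proj_smul : ∀ χ ∈ gens, ∀ i c, proj i (χ • c) = χ • proj (i - 2) c
  pairing : C →ₗ[S] X →ₗ[S] N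
  pairing_injective : Function.Injective pairing
  pairing_proj : ∀ i c y, pairing (proj i c) y = pairing c (K.proj i y)
  pairing_d : ∀ c y, pairing (d c) y = pairing c (K.d y)
  pairing_e : ∀ k c y, pairing (e k c) y = pairing c (K.e k y)
  exists_pairing_eq : ∀ (φ : X →ₗ[S] N) (i : ℤ), ∃ c, ∀ y, pairing c y = φ (K.proj i y)

namespace GradedDual

section Pairing

variable {S X N R C : Type*} [CommRing S] [AddCommGroup X] [Module S X] [AddCommGroup N]
  [Module S N] [CommRing R] [AddCommGroup C] [Module S C] [Module R C]

/-- The coefficientwise extension of a pairing of `C` with `X` to `C[χ]` and `ℕ →₀ X / rX`. -/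
noncomputable def shamashPairing (r : S) (hN : ∀ y : N, r • y = 0) (p : C →ₗ[S] X →ₗ[S] N) :
    PolynomialModule R C →ₗ[S] (ℕ →₀ QuotSMulTop r X) →ₗ[S] N where
  toFun c := Finsupp.lsum S fun k => quotSMulTopLift r (p (c.coeff k)) hN
  map_add' c c' := by
    ext k y
    simp
  map_smul' s c := by
    ext k y
    simp [show (s • c).coeff = s • c.coeff from rfl]

lemma shamashPairing_single (r : S) (hN : ∀ y : N, r • y = 0) (p : C →ₗ[S] X →ₗ[S] N)
    (c : PolynomialModule R C) (k : ℕ) (y : X) :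
    shamashPairing r hN p c (Finsupp.single k (Submodule.Quotient.mk y)) = p (c.coeff k) y := by
  simp [shamashPairing]

lemma shamashPairing_injective {r : S} (hN : ∀ y : N, r • y = 0) {p : C →ₗ[S] X →ₗ[S] N}
    (hp : Function.Injective p) :
    Function.Injective (shamashPairing (R := R) r hN p) := fun c c' h => by
  ext k
  refine hp (LinearMap.ext fun y => ?_)
  rw [← shamashPairing_single r hN, h, shamashPairing_single]

lemma finsupp_quotSMulTop_hom_ext {r : S} {f g : (ℕ →₀ QuotSMulTop r X) →ₗ[S] N}
    (h : ∀ k (y : X), f (Finsupp.single k (Submodule.Quotient.mk y)) =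
      g (Finsupp.single k (Submodule.Quotient.mk y))) (z : ℕ →₀ QuotSMulTop r X) : f z = g z := by
  congr 1
  ext k y
  exact h k y

end Pairing

variable {S X N R C : Type*} [CommRing S] [AddCommGroup X] [Module S X] [AddCommGroup N]
  [Module S N] [CommRing R] [Algebra S R] [AddCommGroup C] [Module S C] [Module R C]
  [IsScalarTower S R C] {n : ℕ}

section Laws

variable {x : Fin n → S} {K : KoszulDGModule x X}

lemma ext_pairing (E : GradedDual K N R C) {c c' : C} (h : ∀ y, E.pairing c y = E.pairing c' y) :
    c = c' :=
  E.pairing_injective (LinearMap.ext h)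

lemma proj_proj_self (E : GradedDual K N R C) (i : ℤ) (c : C) :
    E.proj i (E.proj i c) = E.proj i c :=
  E.ext_pairing fun y => by simp only [E.pairing_proj, K.proj_proj_self]

lemma proj_proj_of_ne (E : GradedDual K N R C) {i j : ℤ} (h : i ≠ j) (c : C) :
    E.proj i (E.proj j c) = 0 :=
  E.ext_pairing fun y => by simp [E.pairing_proj, K.proj_proj_of_ne h.symm]

lemma d_d (E : GradedDual K N R C) (c : C) : E.d (E.d c) = 0 :=
  E.ext_pairing fun y => by simp [E.pairing_d, K.d_d]

lemma proj_d (E : GradedDual K N R C) (i : ℤ) (c : C) :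
    E.proj i (E.d c) = E.d (E.proj (i - 1) c) :=
  E.ext_pairing fun y => by
    simp only [E.pairing_d, E.pairing_proj, K.proj_d, sub_add_cancel]

lemma proj_e (E : GradedDual K N R C) (k : Fin n) (i : ℤ) (c : C) :
    E.proj i (E.e k c) = E.e k (E.proj (i + 1) c) :=
  E.ext_pairing fun y => by
    simp only [E.pairing_e, E.pairing_proj, K.proj_e, add_sub_cancel_right]

lemma e_e_self (E : GradedDual K N R C) (k : Fin n) (c : C) : E.e k (E.e k c) = 0 :=
  E.ext_pairing fun y => by simp [E.pairing_e, K.e_e_self]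

lemma d_e (E : GradedDual K N R C) {k : Fin n} (hN : ∀ y : N, x k • y = 0) (c : C) :
    E.d (E.e k c) = -E.e k (E.d c) :=
  E.ext_pairing fun y => by
    simp [E.pairing_e, E.pairing_d, K.d_e, hN]

/-- Vanishing of the cohomology in degree `i`. -/
def ExactAt (E : GradedDual K N R C) (i : ℤ) : Prop :=
  ∀ c, E.proj i c = c → E.d c = 0 → ∃ b, E.d b = c

lemma ExactAt.exists_homogeneous {E : GradedDual K N R C} {i : ℤ} (hE : E.ExactAt i) {c : C}
    (hc : E.proj i c = c) (hdc : E.d c = 0) : ∃ b, E.proj (i - 1) b = b ∧ E.d b = c := by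
  obtain ⟨b, rfl⟩ := hE c hc hdc
  exact ⟨E.proj (i - 1) b, E.proj_proj_self _ _, by rw [← E.proj_d, hc]⟩

/-- If the cohomology vanishes in all large degrees, then it vanishes in all degrees above `m`. -/
def RigidAbove (E : GradedDual K N R C) (m : ℤ) : Prop :=
  (∃ i₀, ∀ i ≥ i₀, E.ExactAt i) → ∀ i > m, E.ExactAt i

/-- The ungraded dual of a dg-module. -/
noncomputable def linearDual (K : KoszulDGModule x X) (N : Type*) [AddCommGroup N] [Module S N] :
    GradedDual K N S (X →ₗ[S] N) where
  gens := ∅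
  adjoin_gens := Subsingleton.elim _ _
  proj i := LinearMap.lcomp S N (K.proj i)
  d := LinearMap.lcomp S N K.d
  e k := LinearMap.lcomp S N (K.e k)
  proj_smul := by simp
  pairing := LinearMap.id
  pairing_injective := Function.injective_id
  pairing_proj _ _ _ := rfl
  pairing_d _ _ := rfl
  pairing_e _ _ _ := rfl
  exists_pairing_eq φ i := ⟨φ ∘ₗ K.proj i, fun _ => rfl⟩

end Laws

section Shamash

variable {x : Fin (n + 1) → S} {K : KoszulDGModule x X}

/-- The differential `d + χ e₀` on `C[χ]`. -/
noncomputable def shamashD (E : GradedDual K N R C) :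
    PolynomialModule R C →ₗ[R[X]] PolynomialModule R C :=
  polynomialModuleMap E.d + (Polynomial.X : R[X]) • polynomialModuleMap (E.e 0)

/-- The projections of `C[χ]`, where `χ` has degree `2`. -/
noncomputable def shamashProj (E : GradedDual K N R C) (i : ℤ) :
    PolynomialModule R C →ₗ[S] PolynomialModule R C :=
  coeffwiseMap fun k => E.proj (i - 2 * k)

lemma shamashD_coeff_zero (E : GradedDual K N R C) (c : PolynomialModule R C) :
    (E.shamashD c).coeff 0 = E.d (c.coeff 0) := by
  simp [shamashD, coeff_X_smul_zero, polynomialModuleMap_coeff]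

lemma shamashD_coeff_succ (E : GradedDual K N R C) (c : PolynomialModule R C) (k : ℕ) :
    (E.shamashD c).coeff (k + 1) = E.d (c.coeff (k + 1)) + E.e 0 (c.coeff k) := by
  simp [shamashD, coeff_X_smul_succ, polynomialModuleMap_coeff]

lemma shamashProj_coeff (E : GradedDual K N R C) (i : ℤ) (c : PolynomialModule R C) (k : ℕ) :
    (E.shamashProj i c).coeff k = E.proj (i - 2 * k) (c.coeff k) :=
  coeffwiseMap_coeff _ _ _

lemma shamashProj_X_smul (E : GradedDual K N R C) (i : ℤ) (c : PolynomialModule R C) :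
    E.shamashProj i ((Polynomial.X : R[X]) • c) =
      (Polynomial.X : R[X]) • E.shamashProj (i - 2) c := by
  ext k
  cases k with
  | zero => simp only [shamashProj_coeff, coeff_X_smul_zero, map_zero]
  | succ k =>
    simp only [shamashProj_coeff, coeff_X_smul_succ, Nat.cast_add, Nat.cast_one]
    ring_nf

lemma shamashProj_C_smul (E : GradedDual K N R C) {χ : R} (hχ : χ ∈ E.gens) (i : ℤ)
    (c : PolynomialModule R C) : E.shamashProj i (Polynomial.C χ • c) =
      Polynomial.C χ • E.shamashProj (i - 2) c := by
  ext k
  simp only [shamashProj_coeff, coeff_C_smul, E.proj_smul χ hχ]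
  ring_nf

lemma exists_shamashPairing_eq (E : GradedDual K N R C) (hN : ∀ y : N, x 0 • y = 0)
    (φ : (ℕ →₀ QuotSMulTop (x 0) X) →ₗ[S] N) (i : ℤ) :
    ∃ c : PolynomialModule R C, ∀ z, shamashPairing (x 0) hN E.pairing c z =
      φ (K.shamash.proj i z) := by
  choose c hc using fun k : ℕ =>
    E.exists_pairing_eq (φ ∘ₗ Finsupp.lsingle k ∘ₗ Submodule.mkQ _) (i - 2 * k)
  refine ⟨∑ k ∈ Finset.range (i.toNat + 1), PolynomialModule.single R k (c k),
    finsupp_quotSMulTop_hom_ext (g := φ ∘ₗ K.shamash.proj i) fun k y => ?_⟩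
  rw [LinearMap.comp_apply, shamashPairing_single, K.shamash_proj_single]
  simp only [PolynomialModule.coeff_sum, PolynomialModule.coeff_single, Finsupp.finsetSum_apply,
    Finsupp.single_apply, Finset.sum_ite_eq', Finset.mem_range]
  split_ifs with h
  · exact hc k y
  · simp [K.proj_of_neg (i - 2 * k) _ (by omega)]

/-- The graded dual of the Shamash construction. -/
noncomputable def shamash (E : GradedDual K N R C) (hN : ∀ y : N, x 0 • y = 0) :
    GradedDual K.shamash N R[X] (PolynomialModule R C) where
  gens := Polynomial.C '' E.gens ∪ {Polynomial.X}
  adjoin_gens := adjoin_image_C_union_X E.adjoin_gens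
  proj := E.shamashProj
  d := E.shamashD
  e k := polynomialModuleMap (E.e k.succ)
  proj_smul := by
    rintro _ (⟨χ, hχ, rfl⟩ | rfl) i c
    · exact E.shamashProj_C_smul hχ i c
    · exact E.shamashProj_X_smul i c
  pairing := shamashPairing (x 0) hN E.pairing
  pairing_injective := shamashPairing_injective hN E.pairing_injective
  pairing_proj i c := finsupp_quotSMulTop_hom_ext
    (g := shamashPairing (x 0) hN E.pairing c ∘ₗ K.shamash.proj i) fun k y => by
      rw [LinearMap.comp_apply, K.shamash_proj_single, shamashPairing_single,
        shamashPairing_single, shamashProj_coeff, E.pairing_proj]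
  pairing_d c := finsupp_quotSMulTop_hom_ext
    (g := shamashPairing (x 0) hN E.pairing c ∘ₗ K.shamash.d) fun k y => by
      rw [LinearMap.comp_apply, shamashPairing_single]
      cases k with
      | zero =>
        rw [K.shamash_d_single_zero, shamashPairing_single, shamashD_coeff_zero, E.pairing_d]
      | succ k =>
        simp only [K.shamash_d_single_succ, map_add, LinearMap.add_apply, shamashPairing_single,
          shamashD_coeff_succ, E.pairing_d, E.pairing_e]
  pairing_e k c := finsupp_quotSMulTop_hom_ext
    (g := shamashPairing (x 0) hN E.pairing c ∘ₗ K.shamash.e k) fun j y => by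
      rw [LinearMap.comp_apply, K.shamash_e_single, shamashPairing_single, shamashPairing_single,
        polynomialModuleMap_coeff, E.pairing_e]
  exists_pairing_eq := E.exists_shamashPairing_eq hN

variable (E : GradedDual K N R C) (hN : ∀ y : N, x 0 • y = 0)

lemma shamash_d_coeff_zero (c : PolynomialModule R C) :
    ((E.shamash hN).d c).coeff 0 = E.d (c.coeff 0) :=
  E.shamashD_coeff_zero c

lemma shamash_d_single (c : C) :
    (E.shamash hN).d (PolynomialModule.single R 0 c) = PolynomialModule.single R 0 (E.d c) +
      (Polynomial.X : R[X]) • PolynomialModule.single R 0 (E.e 0 c) := by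
  simp only [shamash, shamashD, LinearMap.add_apply, LinearMap.smul_apply,
    polynomialModuleMap_single]

lemma shamash_proj_coeff_zero (i : ℤ) (c : PolynomialModule R C) :
    ((E.shamash hN).proj i c).coeff 0 = E.proj i (c.coeff 0) := by
  simp [shamash, shamashProj_coeff]

lemma shamash_proj_single (i : ℤ) (c : C) :
    (E.shamash hN).proj i (PolynomialModule.single R 0 c) =
      PolynomialModule.single R 0 (E.proj i c) := by
  ext k
  cases k <;> simp [shamash, shamashProj_coeff]

lemma shamash_proj_X_smul (i : ℤ) (c : PolynomialModule R C) :
    (E.shamash hN).proj i ((Polynomial.X : R[X]) • c) =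
      (Polynomial.X : R[X]) • (E.shamash hN).proj (i - 2) c :=
  E.shamashProj_X_smul i c

variable {E}

lemma ExactAt.of_shamash {i : ℤ} (h₁ : (E.shamash hN).ExactAt (i - 1))
    (h₂ : (E.shamash hN).ExactAt i) : E.ExactAt i := fun c hc hdc => by
  obtain ⟨b, hb, hdb⟩ := h₁.exists_homogeneous (c := PolynomialModule.single R 0 (E.e 0 c))
    (by rw [shamash_proj_single, E.proj_e, sub_add_cancel, hc])
    (by simp [shamash_d_single, E.d_e hN, E.e_e_self, hdc])
  rw [sub_sub, one_add_one_eq_two] at hb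
  obtain ⟨u, hu⟩ := h₂ (PolynomialModule.single R 0 c - (Polynomial.X : R[X]) • b)
    (by rw [map_sub, shamash_proj_single, hc, shamash_proj_X_smul, hb])
    (by rw [map_sub, shamash_d_single, map_smul, hdb, hdc]; simp)
  exact ⟨u.coeff 0, by
    simp [← E.shamash_d_coeff_zero hN, hu, polynomialModule_coeff_sub, coeff_X_smul_zero]⟩

lemma ExactAt.shamash {i : ℤ} (h₁ : E.ExactAt (i + 1)) (h₂ : (E.shamash hN).ExactAt (i + 2)) :
    (E.shamash hN).ExactAt i := fun c hc hdc => by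
  obtain ⟨u, hu, hdu⟩ := h₂.exists_homogeneous (c := (Polynomial.X : R[X]) • c)
    (by rw [shamash_proj_X_smul, add_sub_cancel_right, hc]) (by rw [map_smul, hdc, smul_zero])
  rw [show i + 2 - 1 = i + 1 by ring] at hu
  obtain ⟨v, hv⟩ := h₁ (u.coeff 0) (by rw [← E.shamash_proj_coeff_zero hN, hu])
    (by rw [← E.shamash_d_coeff_zero hN, hdu, coeff_X_smul_zero])
  obtain ⟨w, hw⟩ := polynomialModule_exists_eq_X_smul
    (u - (E.shamash hN).d (PolynomialModule.single R 0 v))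
    (by simp [polynomialModule_coeff_sub, E.shamash_d_coeff_zero hN, hv])
  refine ⟨w, polynomialModule_X_smul_injective (R := R) ?_⟩
  simp only [← map_smul, ← hw, map_sub, (E.shamash hN).d_d, hdu, sub_zero]

theorem RigidAbove.shamash {m : ℤ} (hE : E.RigidAbove m) : (E.shamash hN).RigidAbove (m - 1) := by
  rintro ⟨i₀, hi₀⟩
  have hexact : ∀ i > m, E.ExactAt i := hE ⟨i₀ + 1, fun i hi =>
    .of_shamash hN (hi₀ _ (by omega)) (hi₀ _ (by omega))⟩
  have descent : ∀ k : ℕ, ∀ i > m - 1, i₀ - k ≤ i → (E.shamash hN).ExactAt i := fun k => by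
    induction k with
    | zero => exact fun i _ hi => hi₀ i (by simpa using hi)
    | succ k ih =>
      exact fun i hmi hi =>
        (hexact (i + 1) (by omega)).shamash hN (ih (i + 2) (by omega) (by omega))
  exact fun i hi => descent (i₀ - i).toNat i hi (by omega)

end Shamash

end GradedDual

end GradedDual

section LinearResolutions

/-- A resolution `⋯ → P 1 → P 0 → M → 0` of a module, in terms of linear maps. -/
structure LinearResolution (A M : Type*) (P : ℕ → Type*) [CommRing A] [AddCommGroup M] [Module A M]
    [∀ n, AddCommGroup (P n)] [∀ n, Module A (P n)] where
  d : ∀ n, P (n + 1) →ₗ[A] P n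
  ε : P 0 →ₗ[A] M
  exact : ∀ n, Function.Exact (d (n + 1)) (d n)
  exact_zero : Function.Exact (d 0) ε
  surjective : Function.Surjective ε

namespace LinearResolution

section Hom

variable {A M N : Type*} {P : ℕ → Type*} [CommRing A] [AddCommGroup M] [Module A M]
  [AddCommGroup N] [Module A N] [∀ n, AddCommGroup (P n)] [∀ n, Module A (P n)]

lemma d_comp_d (F : LinearResolution A M P) (n : ℕ) : F.d n ∘ₗ F.d (n + 1) = 0 :=
  (F.exact n).linearMap_comp_eq_zero

/-- Exactness of `Hom(P, N)` in degree `n + 1`. -/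
def HomExactAt (F : LinearResolution A M P) (N : Type*) [AddCommGroup N] [Module A N] (n : ℕ) :
    Prop :=
  ∀ φ : P (n + 1) →ₗ[A] N, φ ∘ₗ F.d (n + 1) = 0 → ∃ ψ : P n →ₗ[A] N, ψ ∘ₗ F.d n = φ

lemma homExactAt_iff_exact (F : LinearResolution A M P) (n : ℕ) : F.HomExactAt N n ↔
    Function.Exact (LinearMap.lcomp A N (F.d n)) (LinearMap.lcomp A N (F.d (n + 1))) := by
  refine ⟨fun h φ => ⟨h φ, ?_⟩, fun h φ => (h φ).1⟩
  rintro ⟨ψ, rfl⟩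
  change (ψ ∘ₗ F.d n) ∘ₗ F.d (n + 1) = 0
  rw [LinearMap.comp_assoc, F.d_comp_d, LinearMap.comp_zero]

end Hom

section Ext

variable {A M N : Type u} {P : ℕ → Type u} [CommRing A] [AddCommGroup M] [Module A M]
  [AddCommGroup N] [Module A N] [∀ n, AddCommGroup (P n)] [∀ n, Module A (P n)]

/-- The underlying chain complex. -/
noncomputable def chainComplex (F : LinearResolution A M P) : ChainComplex (ModuleCat A) ℕ :=
  ChainComplex.of (fun n => ModuleCat.of A (P n)) (fun n => ModuleCat.ofHom (F.d n)) fun n =>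
    ModuleCat.hom_ext (F.d_comp_d n)

lemma chainComplex_d (F : LinearResolution A M P) (n : ℕ) :
    F.chainComplex.d (n + 1) n = ModuleCat.ofHom (F.d n) :=
  ChainComplex.of_d (fun n => ModuleCat.of A (P n)) (fun n => ModuleCat.ofHom (F.d n)) _

lemma chainComplex_d_comp_ε (F : LinearResolution A M P) :
    F.chainComplex.d 1 0 ≫ (ModuleCat.ofHom F.ε : ModuleCat.of A (P 0) ⟶ _) = 0 := by
  rw [chainComplex_d]
  exact ModuleCat.hom_ext F.exact_zero.linearMap_comp_eq_zero

/-- The augmentation `P → M`, as a morphism of complexes. -/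
noncomputable def augmentation (F : LinearResolution A M P) :
    F.chainComplex ⟶ (ChainComplex.single₀ (ModuleCat A)).obj (ModuleCat.of A M) :=
  (ChainComplex.toSingle₀Equiv _ _).symm ⟨ModuleCat.ofHom F.ε, F.chainComplex_d_comp_ε⟩

lemma quasiIsoAt_augmentation_zero (F : LinearResolution A M P) : QuasiIsoAt F.augmentation 0 := by
  rw [ChainComplex.quasiIsoAt₀_iff, ShortComplex.quasiIso_iff_of_zeros' _ rfl rfl rfl]
  have hexact : (ShortComplex.mk _ _ F.chainComplex_d_comp_ε).Exact := by
    rw [ShortComplex.ShortExact.moduleCat_exact_iff_function_exact]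
    simp only [chainComplex_d]
    exact F.exact_zero
  have hepi : Epi (ModuleCat.ofHom F.ε) := (ModuleCat.epi_iff_surjective _).2 F.surjective
  refine (ShortComplex.exact_and_epi_g_iff_of_iso ?_).2 ⟨hexact, hepi⟩
  refine ShortComplex.isoMk (Iso.refl _) (Iso.refl _) (Iso.refl _)
    ((Category.id_comp _).trans (Category.comp_id _).symm)
    ((Category.id_comp _).trans (Eq.trans ?_ (Category.comp_id _).symm))
  exact (ChainComplex.toSingle₀Equiv_symm_apply_f_zero _ F.chainComplex_d_comp_ε).symm

lemma chainComplex_exactAt_succ (F : LinearResolution A M P) (n : ℕ) :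
    F.chainComplex.ExactAt (n + 1) := by
  rw [HomologicalComplex.exactAt_iff' _ (n + 1 + 1) (n + 1) n (by simp) (by simp),
    ShortComplex.ShortExact.moduleCat_exact_iff_function_exact]
  simp only [HomologicalComplex.sc', HomologicalComplex.shortComplexFunctor', chainComplex_d]
  exact F.exact n

/-- The resolution as an object of Mathlib's homological algebra. -/
noncomputable def projectiveResolution (F : LinearResolution A M P)
    [hP : ∀ n, Module.Projective A (P n)] : ProjectiveResolution (ModuleCat.of A M) where
  complex := F.chainComplex
  projective n := (IsProjective.iff_projective (P n)).1 (hP n)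
  π := F.augmentation
  quasiIso := ⟨fun n => by
    cases n with
    | zero => exact F.quasiIsoAt_augmentation_zero
    | succ n =>
      rw [quasiIsoAt_iff_exactAt' _ _ (ChainComplex.exactAt_succ_single_obj _ _)]
      exact F.chainComplex_exactAt_succ n⟩

lemma homExactAt_iff_chainComplex (F : LinearResolution A M P) (n : ℕ) : F.HomExactAt N n ↔
    ∀ φ : F.chainComplex.X (n + 1) ⟶ ModuleCat.of A N, F.chainComplex.d (n + 2) (n + 1) ≫ φ = 0 →
      ∃ ψ, F.chainComplex.d (n + 1) n ≫ ψ = φ := by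
  simp only [chainComplex_d]
  refine ⟨fun h φ hφ => ?_, fun h φ hφ => ?_⟩
  · obtain ⟨ψ, hψ⟩ := h (ModuleCat.Hom.hom φ) (congrArg ModuleCat.Hom.hom hφ)
    exact ⟨ModuleCat.ofHom ψ, ModuleCat.hom_ext hψ⟩
  · obtain ⟨ψ, hψ⟩ := h (ModuleCat.ofHom φ) (ModuleCat.hom_ext hφ)
    exact ⟨ModuleCat.Hom.hom ψ, congrArg ModuleCat.Hom.hom hψ⟩

lemma homExactAt_of_hasProjectiveDimensionLT (F : LinearResolution A M P)
    [∀ n, Module.Projective A (P n)] {m n : ℕ}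
    (hM : HasProjectiveDimensionLT (ModuleCat.of A M) m) (hm : m ≤ n + 1) : F.HomExactAt N n := by
  refine (F.homExactAt_iff_chainComplex n).2 fun φ hφ => ?_
  exact (F.projectiveResolution.extMk_eq_zero_iff φ (n + 2) rfl hφ n rfl).1
    (Abelian.Ext.eq_zero_of_hasProjectiveDimensionLT _ m hm)

end Ext

lemma subsingleton_extGroup_iff {A M N : Type} {P : ℕ → Type} [CommRing A] [AddCommGroup M]
    [Module A M] [AddCommGroup N] [Module A N] [∀ n, AddCommGroup (P n)] [∀ n, Module A (P n)]
    [∀ n, Module.Projective A (P n)] (F : LinearResolution A M P) (n : ℕ) :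
    Subsingleton (extGroup A M N (n + 1)) ↔ F.HomExactAt N n := by
  rw [← ModuleCat.isZero_iff_subsingleton,
    (F.projectiveResolution.isoExt (n + 1) (ModuleCat.of A N)).isZero_iff,
    ← HomologicalComplex.exactAt_iff_isZero_homology,
    HomologicalComplex.exactAt_iff' _ n (n + 1) (n + 2) (by simp) (by simp),
    ShortComplex.ShortExact.moduleCat_exact_iff_function_exact, homExactAt_iff_chainComplex]
  refine ⟨fun h φ => (h φ).1, fun h φ => ⟨h φ, ?_⟩⟩
  rintro ⟨(ψ : F.chainComplex.X n ⟶ ModuleCat.of A N), rfl⟩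
  exact (F.chainComplex.d_comp_d_assoc (n + 2) (n + 1) n ψ).trans Limits.zero_comp

section BaseChange

open TensorProduct

lemma exists_finite_free {A : Type*} [CommRing A] [IsNoetherianRing A] (M : Type*) [AddCommGroup M]
    [Module A M] [Module.Finite A M] :
    ∃ r : ℕ → ℕ, Nonempty (LinearResolution A M fun n => Fin (r n) → A) := by
  obtain ⟨r₀, ε, hε⟩ := Module.Finite.exists_fin' A M
  have hcover : ∀ V : Σ r : ℕ, Submodule A (Fin r → A), ∃ (r' : ℕ)
      (f : (Fin r' → A) →ₗ[A] (Fin V.1 → A)), V.2 = LinearMap.range f := fun V => by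
    obtain ⟨r', g, hg⟩ := Module.Finite.exists_fin' A V.2
    exact ⟨r', V.2.subtype ∘ₗ g, by
      rw [LinearMap.range_comp_of_range_eq_top _ (LinearMap.range_eq_top.2 hg),
        Submodule.range_subtype]⟩
  choose r' f hf using hcover
  let kernels : ℕ → Σ r : ℕ, Submodule A (Fin r → A) := fun n =>
    n.rec ⟨r₀, LinearMap.ker ε⟩ fun _ V => ⟨r' V, LinearMap.ker (f V)⟩
  exact ⟨fun n => (kernels n).1, ⟨{
    d := fun n => f (kernels n)
    ε := ε
    exact := fun n => LinearMap.exact_iff.2 (hf (kernels (n + 1)))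
    exact_zero := LinearMap.exact_iff.2 (hf (kernels 0))
    surjective := hε }⟩⟩

variable {A M N : Type*} {P : ℕ → Type*} [CommRing A] [AddCommGroup M] [Module A M]
  [AddCommGroup N] [Module A N] [∀ n, AddCommGroup (P n)] [∀ n, Module A (P n)]
  (B : Type*) [CommRing B] [Algebra A B]

/-- The resolution `B ⊗ P` of `B ⊗ M` over a flat `A`-algebra `B`. -/
noncomputable def baseChange [Module.Flat A B] (F : LinearResolution A M P) :
    LinearResolution B (B ⊗[A] M) fun n => B ⊗[A] P n where
  d n := (F.d n).baseChange B
  ε := F.ε.baseChange B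
  exact n := Module.Flat.lTensor_exact B (F.exact n)
  exact_zero := Module.Flat.lTensor_exact B F.exact_zero
  surjective := LinearMap.lTensor_surjective B F.surjective

lemma lcomp_baseChange_comp_equiv [Module.Flat A B] {P Q : Type*} [AddCommGroup P] [Module A P]
    [Module.FinitePresentation A P] [AddCommGroup Q] [Module A Q] [Module.FinitePresentation A Q]
    (f : P →ₗ[A] Q) :
    (LinearMap.lcomp B (B ⊗[A] N) (f.baseChange B)).restrictScalars A ∘ₗ
        ((Module.FinitePresentation.isBaseChange_map A Q N B).equiv.restrictScalars A).toLinearMap =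
      ((Module.FinitePresentation.isBaseChange_map A P N B).equiv.restrictScalars A).toLinearMap ∘ₗ
        LinearMap.lTensor B (LinearMap.lcomp A N f) := by
  refine TensorProduct.ext' fun b φ => ?_
  change LinearMap.lcomp B (B ⊗[A] N) (f.baseChange B)
    ((Module.FinitePresentation.isBaseChange_map A Q N B).equiv (b ⊗ₜ φ)) =
    (Module.FinitePresentation.isBaseChange_map A P N B).equiv (b ⊗ₜ (φ ∘ₗ f))
  simp only [IsBaseChange.equiv_tmul, map_smul, LinearMap.baseChangeHom_apply,
    LinearMap.baseChange_comp]
  rfl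

lemma homExactAt_baseChange_iff [Module.FaithfullyFlat A B]
    [∀ n, Module.FinitePresentation A (P n)] (F : LinearResolution A M P) (n : ℕ) :
    (F.baseChange B).HomExactAt (B ⊗[A] N) n ↔ F.HomExactAt N n := by
  rw [homExactAt_iff_exact, homExactAt_iff_exact,
    ← Module.FaithfullyFlat.lTensor_exact_iff_exact A B]
  exact Function.Exact.iff_of_ladder_linearEquiv (lcomp_baseChange_comp_equiv B (F.d n))
    (lcomp_baseChange_comp_equiv B (F.d (n + 1)))

end BaseChange

end LinearResolution

open TensorProduct in
theorem subsingleton_extGroup_baseChange_iff {A B : Type} [CommRing A] [IsNoetherianRing A]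
    [CommRing B] [Algebra A B] [Module.FaithfullyFlat A B] (M N : Type) [AddCommGroup M]
    [Module A M] [Module.Finite A M] [AddCommGroup N] [Module A N] (n : ℕ) :
    Subsingleton (extGroup B (B ⊗[A] M) (B ⊗[A] N) (n + 1)) ↔
      Subsingleton (extGroup A M N (n + 1)) := by
  obtain ⟨_, ⟨F⟩⟩ := LinearResolution.exists_finite_free (A := A) M
  rw [F.subsingleton_extGroup_iff, (F.baseChange B).subsingleton_extGroup_iff]
  exact F.homExactAt_baseChange_iff B n

end LinearResolutions

section Periodicity

lemma smul_mem_of_adjoin_eq_top_s8 {S R C : Type*} [CommRing S] [CommRing R] [Algebra S R]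
    [AddCommGroup C] [Module S C] [Module R C] [IsScalarTower S R C] {gens : Set R}
    (hgens : Algebra.adjoin S gens = ⊤) {V : Submodule S C}
    (hV : ∀ χ ∈ gens, ∀ c ∈ V, χ • c ∈ V) (r : R) {c : C} (hc : c ∈ V) : r • c ∈ V := by
  have hr : r ∈ Algebra.adjoin S gens := hgens ▸ Algebra.mem_top
  induction hr using Algebra.adjoin_induction generalizing c with
  | mem χ hχ => exact hV χ hχ c hc
  | algebraMap s => exact (algebraMap_smul R s c).symm ▸ V.smul_mem s hc
  | add a b _ _ ha hb => exact (add_smul a b c).symm ▸ V.add_mem (ha hc) (hb hc)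
  | mul a b _ _ ha hb => exact (mul_smul a b c).symm ▸ ha (hb hc)

namespace GradedDual

variable {S X N R C : Type*} [CommRing S] [AddCommGroup X] [Module S X] [AddCommGroup N]
  [Module S N] [CommRing R] [Algebra S R] [AddCommGroup C] [Module S C] [Module R C]
  [IsScalarTower S R C] {n : ℕ} {x : Fin n → S} {K : KoszulDGModule x X}

/-- The homogeneous cocycles of degree `i`. -/
def cocycles (E : GradedDual K N R C) (i : ℤ) : Submodule S C where
  carrier := {c | E.proj i c = c ∧ E.d c = 0}
  zero_mem' := ⟨map_zero _, map_zero _⟩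
  add_mem' {a b} ha hb :=
    ⟨by rw [map_add, ha.1, hb.1], by rw [map_add, ha.2, hb.2, add_zero]⟩
  smul_mem' s c hc :=
    ⟨by rw [map_smul, hc.1], by rw [LinearMap.map_smul_of_tower, hc.2, smul_zero]⟩

/-- The cocycles of degree `i` generated by the operators of degree `2` from those of degree
`i - 2`. -/
def decomposables (E : GradedDual K N R C) (i : ℤ) : Submodule S C :=
  Submodule.span S {c | ∃ χ ∈ E.gens, ∃ b ∈ E.cocycles (i - 2), χ • b = c}

/-- The elements all of whose components are cocycles, decomposable in degrees above `m`. -/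
def decomposableAbove (E : GradedDual K N R C) (m : ℤ) : Submodule S C where
  carrier := {c | ∀ i, E.d (E.proj i c) = 0 ∧ (m < i → E.proj i c ∈ E.decomposables i)}
  zero_mem' i := by simp
  add_mem' {a b} ha hb i := by
    rw [map_add, map_add, (ha i).1, (hb i).1, add_zero]
    exact ⟨rfl, fun h => add_mem ((ha i).2 h) ((hb i).2 h)⟩
  smul_mem' s c hc i := by
    rw [map_smul, LinearMap.map_smul_of_tower, (hc i).1, smul_zero]
    exact ⟨rfl, fun h => Submodule.smul_mem _ _ ((hc i).2 h)⟩

lemma cocycles_le_decomposableAbove (E : GradedDual K N R C) {i m : ℤ} (hi : i ≤ m) :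
    E.cocycles i ≤ E.decomposableAbove m := by
  rintro c ⟨hc, hdc⟩ j
  by_cases h : j = i
  · exact ⟨by rw [h, hc, hdc], fun hj => by omega⟩
  · rw [← hc, E.proj_proj_of_ne h, map_zero]
    exact ⟨rfl, fun _ => zero_mem _⟩

lemma smul_mem_decomposableAbove (E : GradedDual K N R C) {m : ℤ} (r : R) {c : C}
    (hc : c ∈ E.decomposableAbove m) : r • c ∈ E.decomposableAbove m := by
  refine smul_mem_of_adjoin_eq_top_s8 E.adjoin_gens (V := E.decomposableAbove m)
    (fun χ hχ c hc i => ?_) r hc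
  rw [E.proj_smul χ hχ, map_smul, (hc _).1, smul_zero]
  exact ⟨rfl, fun _ => Submodule.subset_span ⟨χ, hχ, _, ⟨E.proj_proj_self _ _, (hc _).1⟩, rfl⟩⟩

lemma exists_cocycles_le_decomposables (E : GradedDual K N R C) [IsNoetherianRing R]
    [Module.Finite R C] : ∃ m, ∀ i > m, E.cocycles i ≤ E.decomposables i := by
  obtain ⟨s, hs, hspan⟩ := Submodule.fg_span_iff_fg_span_finset_subset _ |>.1
    (IsNoetherian.noetherian (Submodule.span R {c | ∃ i, c ∈ E.cocycles i}))
  choose! deg hdeg using hs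
  obtain ⟨m, hm⟩ := (s.image deg).exists_le
  let V : Submodule R C :=
    { E.decomposableAbove m with smul_mem' := fun r _ => E.smul_mem_decomposableAbove r }
  have hsV : Submodule.span R s ≤ V := Submodule.span_le.2 fun c hc =>
    E.cocycles_le_decomposableAbove (hm _ (Finset.mem_image_of_mem deg hc)) (hdeg hc)
  refine ⟨m, fun i hi c hc => hc.1 ▸ (hsV ?_ i).2 hi⟩
  exact hspan ▸ Submodule.subset_span ⟨i, hc⟩

lemma decomposables_le_range_d (E : GradedDual K N R C) {i : ℤ} (hE : E.ExactAt (i - 2)) :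
    E.decomposables i ≤ LinearMap.range (E.d.restrictScalars S) := by
  refine Submodule.span_le.2 ?_
  rintro _ ⟨χ, -, b, ⟨hb, hdb⟩, rfl⟩
  obtain ⟨u, rfl⟩ := hE b hb hdb
  exact ⟨χ • u, E.d.map_smul χ u⟩

lemma exists_exactAt_add_two (E : GradedDual K N R C) [IsNoetherianRing R] [Module.Finite R C] :
    ∃ m : ℕ, ∀ i : ℕ, m ≤ i → E.ExactAt i → E.ExactAt (i + 2 : ℕ) := by
  obtain ⟨m, hm⟩ := E.exists_cocycles_le_decomposables
  refine ⟨m.toNat, fun i hi hE c hc hdc => ?_⟩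
  refine E.decomposables_le_range_d (i := (i + 2 : ℕ)) ?_ (hm _ (by omega) ⟨hc, hdc⟩)
  simpa using hE

end GradedDual

/-- Either `P` holds at all integers above `m`, or it fails at all large even integers or at all
large odd integers. -/
def EvenOddDichotomy (P : ℕ → Prop) (m : ℕ) : Prop :=
  (∀ i > m, P i) ∨ ∃ m₀, (∀ i ≥ m₀, Even i → ¬P i) ∨ ∀ i ≥ m₀, Odd i → ¬P i

lemma EvenOddDichotomy.congr {P Q : ℕ → Prop} {m : ℕ} (hP : EvenOddDichotomy P m)
    (hPQ : ∀ i, P (i + 1) ↔ Q (i + 1)) : EvenOddDichotomy Q m := by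
  have hPQ' : ∀ i > 0, (P i ↔ Q i) := fun i hi => Nat.succ_pred_eq_of_pos hi ▸ hPQ i.pred
  refine hP.imp (fun h i hi => (hPQ' i (by omega)).1 (h i hi)) ?_
  rintro ⟨m₀, h⟩
  exact ⟨m₀ + 1, h.imp (fun h i hi hi' => (hPQ' i (by omega)).not.1 (h i (by omega) hi'))
    fun h i hi hi' => (hPQ' i (by omega)).not.1 (h i (by omega) hi')⟩

lemma evenOddDichotomy_of_add_two {P : ℕ → Prop} {i₀ m : ℕ} (hstep : ∀ i ≥ i₀, P i → P (i + 2))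
    (hrigid : (∃ i₁, ∀ i ≥ i₁, P i) → ∀ i > m, P i) : EvenOddDichotomy P m := by
  refine or_iff_not_imp_right.2 fun h => hrigid ?_
  push Not at h
  obtain ⟨⟨a, ha, hae, hPa⟩, b, hb, hbo, hPb⟩ := h i₀
  have hstep' : ∀ i ≥ i₀, P i → ∀ k, P (i + 2 * k) := fun i hi hPi k => by
    induction k with
    | zero => exact hPi
    | succ k ih => exact hstep (i + 2 * k) (by omega) ih
  refine ⟨a + b, fun i hi => ?_⟩
  rcases Nat.even_or_odd' i with ⟨k, rfl | rfl⟩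
  · obtain ⟨l, rfl⟩ := hae
    convert hstep' _ ha hPa (k - l) using 1
    omega
  · obtain ⟨l, rfl⟩ := hbo
    convert hstep' _ hb hPb (k - l) using 1
    omega

lemma GradedDual.RigidAbove.evenOddDichotomy {S X N R C : Type*} [CommRing S] [AddCommGroup X]
    [Module S X] [AddCommGroup N] [Module S N] [CommRing R] [Algebra S R] [AddCommGroup C]
    [Module S C] [Module R C] [IsScalarTower S R C] [IsNoetherianRing R] [Module.Finite R C]
    {n : ℕ} {x : Fin n → S} {K : KoszulDGModule x X} {E : GradedDual K N R C} {m : ℕ}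
    (hE : E.RigidAbove m) : EvenOddDichotomy (fun i => E.ExactAt i) m := by
  obtain ⟨i₀, hi₀⟩ := E.exists_exactAt_add_two
  refine evenOddDichotomy_of_add_two hi₀ ?_
  rintro ⟨i₁, hi₁⟩ i hi
  refine hE ⟨i₁, fun j hj => ?_⟩ i (by exact_mod_cast hi)
  lift j to ℕ using (Nat.cast_nonneg i₁).trans hj
  exact hi₁ j (by exact_mod_cast hj)

end Periodicity

section DegreeParts

namespace KoszulDGModule

variable {S A X M : Type*} [CommRing S] [CommRing A] [Algebra S A]
  [AddCommGroup X] [Module S X] [Module A X] [IsScalarTower S A X]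
  [AddCommGroup M] [Module S M] [Module A M] [IsScalarTower S A M]
  {n : ℕ} {x : Fin n → S}

/-- The component of degree `i` of a dg-module whose underlying module is defined over a quotient
`A` of `S`. -/
noncomputable abbrev degreePart (K : KoszulDGModule x X)
    (hA : Function.Surjective (algebraMap S A)) (i : ℕ) : Submodule A X :=
  LinearMap.range ((K.proj i).extendScalarsOfSurjective hA)

variable (K : KoszulDGModule x X) (hA : Function.Surjective (algebraMap S A))

/-- The projection onto the component of degree `i`. -/
noncomputable def toDegreePart (i : ℕ) : X →ₗ[S] K.degreePart hA i :=
  ((K.proj i).extendScalarsOfSurjective hA).rangeRestrict.restrictScalars S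

lemma proj_degreePart (i : ℕ) (z : K.degreePart hA i) : K.proj i (z : X) = z := by
  obtain ⟨_, y, rfl⟩ := z
  exact K.proj_proj_self i y

lemma toDegreePart_coe (i : ℕ) (z : K.degreePart hA i) : K.toDegreePart hA i z = z :=
  Subtype.ext (K.proj_degreePart hA i z)

/-- The differential between the components of consecutive degrees. -/
noncomputable def degreePartD (i : ℕ) : K.degreePart hA (i + 1) →ₗ[A] K.degreePart hA i :=
  (K.d.extendScalarsOfSurjective hA ∘ₗ Submodule.subtype _).codRestrict _ fun z =>
    ⟨K.d z, (K.proj_d i z).trans (congrArg K.d (K.proj_degreePart hA (i + 1) z))⟩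

lemma toDegreePart_d (i : ℕ) (y : X) :
    K.toDegreePart hA i (K.d y) = K.degreePartD hA i (K.toDegreePart hA (i + 1) y) :=
  Subtype.ext (K.proj_d i y)

lemma d_d_degreePart (i : ℕ) : K.degreePartD hA i ∘ₗ K.degreePartD hA (i + 1) = 0 :=
  LinearMap.ext fun z => Subtype.ext (K.d_d (z : X))

variable {K}

/-- The components of a resolution by a dg-module over the Koszul complex form a resolution in the
ordinary sense. -/
noncomputable def IsTrivialFibration.linearResolution {hM : ∀ k, ∀ y : M, x k • y = 0}
    {f : X →ₗ[S] M} (hf : IsTrivialFibration K (concentrated x hM) f) :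
    LinearResolution A M fun i => K.degreePart hA i where
  d := K.degreePartD hA
  ε := f.extendScalarsOfSurjective hA ∘ₗ Submodule.subtype _
  exact i z := by
    refine ⟨fun hz => ?_, ?_⟩
    · obtain ⟨w, -, hw⟩ := hf.exact z (congrArg Subtype.val hz) (by
        rw [← K.proj_degreePart hA (i + 1) z, hf.apply_proj, if_neg (by omega)])
      exact ⟨K.toDegreePart hA (i + 2) w, by rw [← K.toDegreePart_d, hw, K.toDegreePart_coe]⟩
    · rintro ⟨w, rfl⟩
      exact LinearMap.congr_fun (K.d_d_degreePart hA i) w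
  exact_zero z := by
    refine ⟨fun hz => ?_, ?_⟩
    · obtain ⟨w, -, hw⟩ := hf.exact z (by
        rw [← K.proj_degreePart hA 0 z]; exact K.d_proj_zero z) hz
      exact ⟨K.toDegreePart hA 1 w, by rw [← K.toDegreePart_d, hw, K.toDegreePart_coe]⟩
    · rintro ⟨w, rfl⟩
      exact hf.apply_d w
  surjective m := by
    obtain ⟨y, rfl⟩ := hf.surjective m
    exact ⟨K.toDegreePart hA 0 y, (hf.apply_proj 0 y).trans (if_pos rfl)⟩

end KoszulDGModule

lemma isRelativelyProjective_empty {S : Type u} {X : Type v} [CommRing S] [AddCommGroup X]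
    [Module S X] [Module.Projective S X] : IsRelativelyProjective (∅ : Set S) X :=
  fun _ _ _ _ _ _ _ _ g hg φ => Module.projective_lifting_property g φ hg

lemma IsRelativelyProjective.projective_degreePart {S : Type u} {A X : Type v} [CommRing S]
    [CommRing A] [Algebra S A] [AddCommGroup X] [Module S X] [Module A X] [IsScalarTower S A X]
    {T : Set S} (hX : IsRelativelyProjective T X) (hT : ∀ t ∈ T, algebraMap S A t = 0) {n : ℕ}
    {x : Fin n → S} (K : KoszulDGModule x X) (hA : Function.Surjective (algebraMap S A)) (i : ℕ) :
    Module.Projective A (K.degreePart hA i) := by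
  have hkill : ∀ (U : Type v) [AddCommGroup U] [Module S U] [Module A U] [IsScalarTower S A U],
      ∀ t ∈ T, ∀ y : U, t • y = 0 := fun U _ _ _ _ t ht y => by
    rw [← algebraMap_smul A, hT t ht, zero_smul]
  refine Module.Projective.of_lifting_property'' fun g hg => ?_
  obtain ⟨ψ, hψ⟩ := hX _ _ (hkill _) (hkill _) (g.restrictScalars S) hg (K.toDegreePart hA i)
  refine ⟨ψ.extendScalarsOfSurjective hA ∘ₗ Submodule.subtype _, LinearMap.ext fun z => ?_⟩
  exact (LinearMap.congr_fun hψ (z : X)).trans (K.toDegreePart_coe hA i z)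

section Dual

variable {S A X M N R C : Type*} [CommRing S] [CommRing A] [Algebra S A]
  [AddCommGroup X] [Module S X] [Module A X] [IsScalarTower S A X]
  [AddCommGroup M] [Module S M] [Module A M] [IsScalarTower S A M]
  [AddCommGroup N] [Module S N]
  [CommRing R] [Algebra S R] [AddCommGroup C] [Module S C] [Module R C] [IsScalarTower S R C]
  {n : ℕ} {x : Fin n → S} {K : KoszulDGModule x X}

lemma GradedDual.pairing_toDegreePart (E : GradedDual K N R C)
    (hA : Function.Surjective (algebraMap S A)) {i : ℕ} {c : C} (hc : E.proj i c = c) (y : X) :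
    E.pairing c (K.toDegreePart hA i y) = E.pairing c y :=
  (E.pairing_proj i c y).symm.trans (by rw [hc])

variable [Module A N] [IsScalarTower S A N]

lemma GradedDual.exists_pairing_eq_toDegreePart (E : GradedDual K N R C)
    (hA : Function.Surjective (algebraMap S A)) {i : ℕ} (φ : K.degreePart hA i →ₗ[A] N) :
    ∃ c, E.proj i c = c ∧ ∀ y, E.pairing c y = φ (K.toDegreePart hA i y) := by
  obtain ⟨c, hc⟩ := E.exists_pairing_eq (φ.restrictScalars S ∘ₗ K.toDegreePart hA i) i
  have hc' : ∀ y, E.pairing c y = φ (K.toDegreePart hA i y) := fun y =>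
    (hc y).trans (congrArg φ (K.toDegreePart_coe hA i (K.toDegreePart hA i y)))
  refine ⟨c, E.ext_pairing fun y => ?_, hc'⟩
  rw [E.pairing_proj, hc', hc']
  exact congrArg φ (K.toDegreePart_coe hA i (K.toDegreePart hA i y))

lemma GradedDual.exactAt_iff_homExactAt (E : GradedDual K N R C)
    (hA : Function.Surjective (algebraMap S A)) {hM : ∀ k, ∀ y : M, x k • y = 0} {f : X →ₗ[S] M}
    (hf : K.IsTrivialFibration (KoszulDGModule.concentrated x hM) f) (i : ℕ) :
    E.ExactAt (i + 1 : ℕ) ↔ (hf.linearResolution hA).HomExactAt N i := by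
  refine ⟨fun hE φ hφ => ?_, fun hE c hc hdc => ?_⟩
  · obtain ⟨c, hc, hcφ⟩ := E.exists_pairing_eq_toDegreePart hA φ
    obtain ⟨b, rfl⟩ := hE c hc (E.ext_pairing fun y => by
      rw [E.pairing_d, hcφ, K.toDegreePart_d, map_zero, LinearMap.zero_apply]
      exact LinearMap.congr_fun hφ _)
    refine ⟨(E.pairing b).extendScalarsOfSurjective hA ∘ₗ Submodule.subtype _,
      LinearMap.ext fun z => ?_⟩
    exact (E.pairing_d b z).symm.trans ((hcφ z).trans (by rw [K.toDegreePart_coe]))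
  · obtain ⟨ψ, hψ⟩ := hE ((E.pairing c).extendScalarsOfSurjective hA ∘ₗ Submodule.subtype _)
      (LinearMap.ext fun z => (E.pairing_d c z).symm.trans (by rw [hdc]; simp))
    obtain ⟨b, -, hb⟩ := E.exists_pairing_eq_toDegreePart hA ψ
    refine ⟨b, E.ext_pairing fun y => ?_⟩
    rw [E.pairing_d, hb, K.toDegreePart_d, ← E.pairing_toDegreePart hA hc y]
    exact LinearMap.congr_fun hψ _

end Dual

lemma KoszulDGModule.IsTrivialFibration.rigidAbove_linearDual {S X M : Type u} [CommRing S]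
    [AddCommGroup X] [Module S X] [Module.Projective S X] [AddCommGroup M] [Module S M]
    (N : Type u) [AddCommGroup N] [Module S N] {n : ℕ} {x : Fin n → S} {K : KoszulDGModule x X}
    {hM : ∀ k, ∀ y : M, x k • y = 0} {f : X →ₗ[S] M}
    (hf : IsTrivialFibration K (concentrated x hM) f) {m : ℕ}
    (hpd : HasProjectiveDimensionLT (ModuleCat.of S M) (m + 1)) :
    (GradedDual.linearDual K N).RigidAbove m := by
  intro _ i hi
  lift i to ℕ using by omega
  obtain ⟨i, rfl⟩ := Nat.exists_eq_succ_of_ne_zero (n := i) (by omega)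
  have hS : Function.Surjective (algebraMap S S) := Function.surjective_id
  have := isRelativelyProjective_empty.projective_degreePart (by simp) K hS
  rw [GradedDual.exactAt_iff_homExactAt _ hS hf]
  exact (hf.linearResolution hS).homExactAt_of_hasProjectiveDimensionLT hpd (by omega)

end DegreeParts

section CompleteIntersections

open RingTheory.Sequence

lemma insert_union_range_tail {S : Type*} {n : ℕ} (T : Set S) (x : Fin (n + 1) → S) :
    insert (x 0) T ∪ Set.range (Fin.tail x) = T ∪ Set.range x := by
  conv_rhs => rw [← Fin.cons_self_tail x, Fin.range_cons]
  rw [Set.insert_union, Set.union_insert]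

lemma smul_eq_zero_of_mem_ideal {S M : Type*} [CommRing S] {I : Ideal S} [AddCommGroup M]
    [Module S M] [Module (S ⧸ I) M] [IsScalarTower S (S ⧸ I) M] {a : S} (ha : a ∈ I) (y : M) :
    a • y = 0 := by
  rw [← algebraMap_smul (S ⧸ I), Ideal.Quotient.algebraMap_eq, Ideal.Quotient.eq_zero_iff_mem.2 ha,
    zero_smul]

section Quotient

variable {S M N : Type} [CommRing S] {I : Ideal S}
  [AddCommGroup M] [Module S M] [Module (S ⧸ I) M] [IsScalarTower S (S ⧸ I) M]
  [AddCommGroup N] [Module S N] [Module (S ⧸ I) N] [IsScalarTower S (S ⧸ I) N]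

lemma KoszulDGModule.IsTrivialFibration.exactAt_iff_subsingleton_extGroup {X R C : Type}
    [AddCommGroup X] [Module S X] [CommRing R] [Algebra S R] [AddCommGroup C] [Module S C]
    [Module R C] [IsScalarTower S R C] {n : ℕ} {x : Fin n → S} {K : KoszulDGModule x X}
    {hM : ∀ k, ∀ y : M, x k • y = 0} {f : X →ₗ[S] M}
    (hf : IsTrivialFibration K (concentrated x hM) f) {T : Set S} (hI : I = Ideal.span T)
    (hT : ∀ t ∈ T, ∀ y : X, t • y = 0) (hX : IsRelativelyProjective T X)
    (E : GradedDual K N R C) (i : ℕ) :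
    E.ExactAt (i + 1 : ℕ) ↔ Subsingleton (extGroup (S ⧸ I) M N (i + 1)) := by
  have htorsion : Module.IsTorsionBySet S X I :=
    hI ▸ (Module.isTorsionBySet_iff_is_torsion_by_span T).1 fun y t => hT t t.2 y
  let : Module (S ⧸ I) X := htorsion.module
  have : IsScalarTower S (S ⧸ I) X := htorsion.isScalarTower
  have hA : Function.Surjective (algebraMap S (S ⧸ I)) := Ideal.Quotient.mk_surjective
  have := hX.projective_degreePart (A := S ⧸ I)
    (fun t ht => Ideal.Quotient.eq_zero_iff_mem.2 (hI ▸ Ideal.subset_span ht)) K hA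
  rw [E.exactAt_iff_homExactAt hA hf, (hf.linearResolution hA).subsingleton_extGroup_iff]

theorem KoszulDGModule.IsTrivialFibration.evenOddDichotomy_extGroup {n : ℕ} {x : Fin n → S}
    {X : Type} [AddCommGroup X] [Module S X] {K : KoszulDGModule x X}
    {hM : ∀ k, ∀ y : M, x k • y = 0} {f : X →ₗ[S] M}
    (hf : IsTrivialFibration K (concentrated x hM) f) (hx : IsWeaklyRegular X (List.ofFn x))
    {T : Set S} (hI : I = Ideal.span (T ∪ Set.range x)) (hT : ∀ t ∈ T, ∀ y : X, t • y = 0)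
    (hX : IsRelativelyProjective T X) {R C : Type} [CommRing R] [IsNoetherianRing R] [Algebra S R]
    [AddCommGroup C] [Module S C] [Module R C] [IsScalarTower S R C] [Module.Finite R C]
    {E : GradedDual K N R C} {m : ℕ} (hE : E.RigidAbove (m + n : ℕ)) :
    EvenOddDichotomy (fun i => Subsingleton (extGroup (S ⧸ I) M N i)) m := by
  induction n generalizing T X R C with
  | zero =>
    rw [Set.range_eq_empty, Set.union_empty] at hI
    exact hE.evenOddDichotomy.congr (hf.exactAt_iff_subsingleton_extGroup hI hT hX E)
  | succ n ih =>
    rw [List.ofFn_succ, isWeaklyRegular_cons_iff] at hx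
    have hN : ∀ y : N, x 0 • y = 0 := smul_eq_zero_of_mem_ideal
      (hI ▸ Ideal.subset_span (Set.mem_union_right T (Set.mem_range_self 0)))
    refine ih (hf.shamash hx.1) (isWeaklyRegular_finsupp hx.2)
      (by rw [hI, insert_union_range_tail]) (smul_finsupp_quotSMulTop_eq_zero hT _)
      (hX.finsupp_quotSMulTop _) (E := E.shamash hN) ?_
    simpa [← add_assoc] using hE.shamash hN

theorem evenOddDichotomy_extGroup_of_isWeaklyRegular [IsNoetherianRing S] [Module.Finite S M]
    [Module.Finite S N] {n : ℕ} {x : Fin n → S} (hx : IsWeaklyRegular S (List.ofFn x))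
    (hI : I = Ideal.span (Set.range x)) {m : ℕ}
    (hM : HasProjectiveDimensionLT (ModuleCat.of S M) (m + n + 1)) :
    EvenOddDichotomy (fun i => Subsingleton (extGroup (S ⧸ I) M N i)) m := by
  have hxM : ∀ k, ∀ y : M, x k • y = 0 := fun k =>
    smul_eq_zero_of_mem_ideal (hI ▸ Ideal.subset_span (Set.mem_range_self k))
  obtain ⟨P, _, _, _, _, K, f, hf⟩ :=
    (KoszulDGModule.concentrated x hxM).exists_projective_resolution hM
  have hxP : IsWeaklyRegular P (List.ofFn x) :=
    ((TensorProduct.rid S P).isWeaklyRegular_congr _).1 (hx.isWeaklyRegular_lTensor (M₂ := P))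
  exact hf.evenOddDichotomy_extGroup hxP (T := ∅) (by rw [hI, Set.empty_union]) (by simp)
    isRelativelyProjective_empty (hf.rigidAbove_linearDual N hM)

end Quotient

end CompleteIntersections

section ChangeOfRings

open TensorProduct

variable {S : Type u} [CommRing S]

lemma hasProjectiveDimensionLE_zero_of_projective (P : Type u) [AddCommGroup P] [Module S P]
    [Module.Projective S P] : HasProjectiveDimensionLE (ModuleCat.of S P) 0 :=
  have := (IsProjective.iff_projective (R := S) P).1 inferInstance
  (projective_iff_hasProjectiveDimensionLE_zero _).1 this

variable {x : S}

lemma hasProjectiveDimensionLE_one_quotSMulTop {P : Type u} [AddCommGroup P] [Module S P]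
    [Module.Projective S P] (hx : IsSMulRegular P x) :
    HasProjectiveDimensionLE (ModuleCat.of S (QuotSMulTop x P)) 1 :=
  have hP : HasProjectiveDimensionLT (ModuleCat.of S P) 1 :=
    hasProjectiveDimensionLE_zero_of_projective P
  (IsSMulRegular.smulShortComplex_shortExact (M := ModuleCat.of S P) hx).hasProjectiveDimensionLT_X₃
    1 hP (hasProjectiveDimensionLT_of_ge (ModuleCat.of S P) 1 2 (by norm_num))

variable {X : Type u} [AddCommGroup X] [Module S X] [Module (S ⧸ Ideal.span {x}) X]
  [IsScalarTower S (S ⧸ Ideal.span {x}) X]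

lemma hasProjectiveDimensionLE_one_of_projective_quotient (hx : IsSMulRegular S x)
    [Module.Projective (S ⧸ Ideal.span {x}) X] : HasProjectiveDimensionLE (ModuleCat.of S X) 1 := by
  have hxF : IsSMulRegular (X →₀ S) x := fun a b hab =>
    Finsupp.ext fun i => hx (DFunLike.congr_fun hab i)
  have hfree := hasProjectiveDimensionLE_one_quotSMulTop hxF
  let e := (QuotSMulTop.equivQuotTensor x (X →₀ S)).toModuleIso
  let p := (Finsupp.linearCombination S (id : X → X)).liftBaseChange (S ⧸ Ideal.span {x})
  have hp : Function.Surjective p := fun y => ⟨1 ⊗ₜ Finsupp.single y 1, by simp [p]⟩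
  obtain ⟨s, hs⟩ := Module.projective_lifting_property p LinearMap.id hp
  let retract : Retract (ModuleCat.of S X)
      (ModuleCat.of S ((S ⧸ Ideal.span {x}) ⊗[S] (X →₀ S))) :=
    { i := ModuleCat.ofHom (s.restrictScalars S)
      r := ModuleCat.ofHom (p.restrictScalars S)
      retract := by
        ext y
        exact LinearMap.congr_fun hs y }
  have := hasProjectiveDimensionLT_of_iso e 2
  exact retract.hasProjectiveDimensionLT 2

theorem hasProjectiveDimensionLE_succ_of_quotient (hx : IsSMulRegular S x) {m : ℕ}
    (hX : HasProjectiveDimensionLE (ModuleCat.of (S ⧸ Ideal.span {x}) X) m) :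
    HasProjectiveDimensionLE (ModuleCat.of S X) (m + 1) := by
  induction m generalizing X with
  | zero =>
    have := (IsProjective.iff_projective (R := S ⧸ Ideal.span {x}) X).2
      ((projective_iff_hasProjectiveDimensionLE_zero _).2 hX)
    exact hasProjectiveDimensionLE_one_of_projective_quotient hx
  | succ m ih =>
    let p := Finsupp.linearCombination (S ⧸ Ideal.span {x}) (id : X → X)
    have hp : Function.Surjective p := Finsupp.linearCombination_id_surjective _ _
    have hker := ((LinearMap.shortExact_shortComplexKer hp).hasProjectiveDimensionLT_X₃_iff m
      ((IsProjective.iff_projective (R := S ⧸ Ideal.span {x})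
        (X →₀ S ⧸ Ideal.span {x})).1 inferInstance)).1 hX
    have hfree : HasProjectiveDimensionLE (ModuleCat.of S (X →₀ S ⧸ Ideal.span {x})) 1 :=
      hasProjectiveDimensionLE_one_of_projective_quotient hx
    exact (LinearMap.shortExact_shortComplexKer (f := p.restrictScalars S)
      hp).hasProjectiveDimensionLT_X₃ (m + 2) (ih (X := LinearMap.ker p) hker)
      (hasProjectiveDimensionLT_of_ge _ 2 (m + 3) (by lia))

end ChangeOfRings

section RegularLocalRings

open IsLocalRing

variable {S : Type u} [CommRing S]

lemma exists_isPrime_le_ringKrullDim_quotient {d : ℕ} (h : d ≤ ringKrullDim S) :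
    ∃ q : Ideal S, q.IsPrime ∧ d ≤ ringKrullDim (S ⧸ q) := by
  obtain ⟨l, hl⟩ := Order.le_krullDim_iff.1 h
  refine ⟨l.head.asIdeal, l.head.2, ?_⟩
  rw [ringKrullDim_quotient, Order.le_krullDim_iff]
  exact ⟨⟨l.length, fun i => ⟨l i, (PrimeSpectrum.mem_zeroLocus _ _).2 (LTSeries.head_le l i)⟩,
    l.step⟩, hl⟩

section LocalRing

variable [IsLocalRing S]

lemma isLocalRing_quotient {I : Ideal S} (hI : I ≠ ⊤) : IsLocalRing (S ⧸ I) :=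
  have := Ideal.Quotient.nontrivial_iff.2 hI
  .of_surjective' (Ideal.Quotient.mk I) Ideal.Quotient.mk_surjective

lemma span_singleton_ne_top_of_mem_maximalIdeal {x : S} (hx : x ∈ maximalIdeal S) :
    Ideal.span {x} ≠ ⊤ :=
  mt Ideal.span_singleton_eq_top.1 ((mem_maximalIdeal x).1 hx)

lemma ringKrullDim_le_ringKrullDim_quotient_span_singleton_add_one [IsNoetherianRing S] {x : S}
    (hx : x ∈ maximalIdeal S) : ringKrullDim S ≤ ringKrullDim (S ⧸ Ideal.span {x}) + 1 := by
  have := ringKrullDim_le_ringKrullDim_quotient_add_card {x}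
    (by simpa [ringJacobson_eq_maximalIdeal] using hx)
  rwa [Finset.coe_singleton, Finset.card_singleton, Nat.cast_one] at this

lemma le_span_singleton_of_ringKrullDim_lt [IsNoetherianRing S] {x : S} (hx : x ∈ maximalIdeal S)
    [IsDomain (S ⧸ Ideal.span {x})] {q : Ideal S} (hq : q ≠ ⊤)
    (hdim : ringKrullDim (S ⧸ Ideal.span {x}) < ringKrullDim (S ⧸ q)) : q ≤ Ideal.span {x} := by
  refine fun y hy => by_contra fun hyx => hdim.not_ge ?_
  have := isLocalRing_quotient hq
  have hxq : Ideal.Quotient.mk q x ∈ maximalIdeal (S ⧸ q) :=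
    map_maximalIdeal_of_surjective (Ideal.Quotient.mk q) Ideal.Quotient.mk_surjective ▸
      Ideal.mem_map_of_mem _ hx
  let f : S ⧸ Ideal.span {x} →+* (S ⧸ q) ⧸ Ideal.span {Ideal.Quotient.mk q x} :=
    Ideal.quotientMap _ (Ideal.Quotient.mk q)
      (Ideal.span_le.2 (Set.singleton_subset_iff.2 (Ideal.mem_span_singleton_self _)))
  have hf : Function.Surjective f := Ideal.quotientMap_surjective Ideal.Quotient.mk_surjective
  have hfy : f (Ideal.Quotient.mk _ y) = 0 := by
    simp [f, Ideal.Quotient.eq_zero_iff_mem.2 hy]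
  have hy0 : Ideal.Quotient.mk (Ideal.span {x}) y ≠ 0 :=
    mt Ideal.Quotient.eq_zero_iff_mem.1 hyx
  exact (ringKrullDim_le_ringKrullDim_quotient_span_singleton_add_one hxq).trans
    (ringKrullDim_succ_le_of_surjective f hf (mem_nonZeroDivisors_of_ne_zero hy0) hfy)

lemma eq_bot_of_le_span_singleton [IsNoetherianRing S] {x : S} (hx : x ∈ maximalIdeal S)
    {q : Ideal S} [q.IsPrime] (hxq : x ∉ q) (hq : q ≤ Ideal.span {x}) : q = ⊥ := by
  refine Submodule.eq_bot_of_le_smul_of_le_jacobson_bot (maximalIdeal S) q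
    (IsNoetherian.noetherian q) (fun y hy => ?_) (maximalIdeal_le_jacobson _)
  obtain ⟨b, rfl⟩ := Ideal.mem_span_singleton.1 (hq hy)
  exact Submodule.smul_mem_smul hx ((Ideal.IsPrime.mem_or_mem ‹_› hy).resolve_left hxq)

lemma maximalIdeal_quotient_span_singleton [DecidableEq S] {s : Finset S}
    (hs : Ideal.span s = maximalIdeal S) {x : S} (hx : x ∈ s)
    [IsLocalRing (S ⧸ Ideal.span {x})] : maximalIdeal (S ⧸ Ideal.span {x}) =
      Ideal.span (Ideal.Quotient.mk (Ideal.span {x}) '' s.erase x) := by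
  have hx0 : Ideal.Quotient.mk (Ideal.span {x}) x = 0 :=
    Ideal.Quotient.eq_zero_iff_mem.2 (Ideal.mem_span_singleton_self x)
  rw [← map_maximalIdeal_of_surjective (Ideal.Quotient.mk (Ideal.span {x}))
    Ideal.Quotient.mk_surjective, ← hs, Ideal.map_span, ← Finset.insert_erase hx,
    Finset.coe_insert, Set.image_insert_eq, hx0]
  simp

end LocalRing

lemma exists_isRegularLocalRing_quotient_span_singleton [IsRegularLocalRing S] {d : ℕ}
    (hd : ringKrullDim S = (d + 1 : ℕ)) {q : Ideal S} (hq : ¬ maximalIdeal S ≤ q) :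
    ∃ x ∈ maximalIdeal S, x ∉ q ∧ ringKrullDim (S ⧸ Ideal.span {x}) = d ∧
      IsRegularLocalRing (S ⧸ Ideal.span {x}) := by
  classical
  obtain ⟨s, hs, hspan⟩ := Submodule.FG.exists_span_finset_card_eq_spanFinrank
    (maximalIdeal S).fg_of_isNoetherianRing
  have hcard : s.card = d + 1 := by
    exact_mod_cast hs ▸ (IsRegularLocalRing.spanFinrank_maximalIdeal (R := S)).trans hd
  obtain ⟨x, hxs, hxq⟩ : ∃ x ∈ s, x ∉ q := by
    rwa [← hspan, Submodule.span_le, Set.not_subset] at hq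
  have hx : x ∈ maximalIdeal S := hspan ▸ Submodule.subset_span hxs
  have := isLocalRing_quotient (span_singleton_ne_top_of_mem_maximalIdeal hx)
  have hrank : (maximalIdeal (S ⧸ Ideal.span {x})).spanFinrank ≤ d := by
    rw [maximalIdeal_quotient_span_singleton hspan hxs, ← Finset.coe_image]
    refine (Submodule.spanFinrank_span_le_ncard_of_finite (Finset.finite_toSet _)).trans ?_
    rw [Set.ncard_coe_finset]
    exact Finset.card_image_le.trans (by rw [Finset.card_erase_of_mem hxs, hcard]; rfl)
  have hdim : (d : WithBot ℕ∞) ≤ ringKrullDim (S ⧸ Ideal.span {x}) := by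
    rw [← ENat.WithBot.add_le_add_one_right_iff]
    exact_mod_cast hd ▸ ringKrullDim_le_ringKrullDim_quotient_span_singleton_add_one hx
  exact ⟨x, hx, hxq, hdim.antisymm' ((ringKrullDim_le_spanFinrank_maximalIdeal _).trans
    (by exact_mod_cast hrank)), .of_spanFinrank_maximalIdeal_le _ (le_trans
    (by exact_mod_cast hrank) hdim)⟩

lemma isField_of_isRegularLocalRing [IsRegularLocalRing S] (h : ringKrullDim S = 0) :
    IsField S := by
  rw [isField_iff_maximalIdeal_eq, ← Submodule.spanFinrank_eq_zero_iff_eq_bot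
    (maximalIdeal S).fg_of_isNoetherianRing]
  exact_mod_cast IsRegularLocalRing.spanFinrank_maximalIdeal.trans h

theorem isDomain_of_isRegularLocalRing (S : Type u) [CommRing S] [IsRegularLocalRing S] :
    IsDomain S := by
  obtain ⟨d, hd⟩ : ∃ d : ℕ, ringKrullDim S = d :=
    ⟨_, IsRegularLocalRing.spanFinrank_maximalIdeal.symm⟩
  induction d generalizing S with
  | zero => exact (isField_of_isRegularLocalRing hd).isDomain
  | succ d ih =>
    obtain ⟨q, hq, hqd⟩ := exists_isPrime_le_ringKrullDim_quotient hd.ge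
    have hmq : ¬ maximalIdeal S ≤ q := fun h => by
      obtain rfl := (maximalIdeal.isMaximal S).eq_of_le hq.ne_top h
      rw [ringKrullDim_eq_zero_of_isField
        ((Ideal.Quotient.maximal_ideal_iff_isField_quotient _).1 inferInstance)] at hqd
      norm_cast at hqd
    obtain ⟨x, hx, hxq, hdim, hreg⟩ := exists_isRegularLocalRing_quotient_span_singleton hd hmq
    have := ih _ hdim
    have hlt : ringKrullDim (S ⧸ Ideal.span {x}) < ringKrullDim (S ⧸ q) :=
      hqd.trans_lt' (hdim ▸ by exact_mod_cast d.lt_succ_self)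
    obtain rfl := eq_bot_of_le_span_singleton hx hxq
      (le_span_singleton_of_ringKrullDim_lt hx hq.ne_top hlt)
    exact IsDomain.of_bot_isPrime S

theorem hasProjectiveDimensionLE_of_isRegularLocalRing [IsRegularLocalRing S] {d : ℕ}
    (hd : ringKrullDim S = d) (M : Type u) [AddCommGroup M] [Module S M] [Module.Finite S M] :
    HasProjectiveDimensionLE (ModuleCat.of S M) d := by
  induction d generalizing S M with
  | zero =>
    let := (isField_of_isRegularLocalRing hd).toField
    have : Module.Projective S M := .of_basis (.ofVectorSpace S M)
    exact hasProjectiveDimensionLE_zero_of_projective M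
  | succ d ih =>
    have := isDomain_of_isRegularLocalRing S
    have hbot : ¬ maximalIdeal S ≤ ⊥ := fun h => by
      rw [ringKrullDim_eq_zero_of_isField (isField_iff_maximalIdeal_eq.2 (le_bot_iff.1 h))] at hd
      norm_cast at hd
    obtain ⟨x, hx, hx0, hdim, hreg⟩ := exists_isRegularLocalRing_quotient_span_singleton hd hbot
    obtain ⟨n, p, hp⟩ := Module.Finite.exists_fin' S M
    have hquot : HasProjectiveDimensionLE
        (ModuleCat.of S (QuotSMulTop x (LinearMap.ker p))) (d + 1) :=
      have := Module.Finite.of_restrictScalars_finite S (S ⧸ Ideal.span {x})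
        (QuotSMulTop x (LinearMap.ker p))
      hasProjectiveDimensionLE_succ_of_quotient (.of_ne_zero hx0) (ih hdim _)
    have hker : HasProjectiveDimensionLE (ModuleCat.of S (LinearMap.ker p)) d := by
      rw [← projectiveDimension_le_iff] at hquot ⊢
      rw [ModuleCat.projectiveDimension_quotSMulTop_eq_succ_of_isSMulRegular
        (ModuleCat.of S (LinearMap.ker p)) x (.of_ne_zero hx0) hx] at hquot
      exact ENat.WithBot.add_le_add_one_right_iff.1 (by exact_mod_cast hquot)
    have hfree : HasProjectiveDimensionLE (ModuleCat.of S (Fin n → S)) 0 :=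
      hasProjectiveDimensionLE_zero_of_projective _
    exact (LinearMap.shortExact_shortComplexKer hp).hasProjectiveDimensionLT_X₃ (d + 1) hker
      (hasProjectiveDimensionLT_of_ge _ 1 (d + 2) (by lia))

end RegularLocalRings

section Completion

open IsLocalRing RingTheory.Sequence TensorProduct

lemma ringKrullDim_le_of_map_maximalIdeal_eq {A B : Type*} [CommRing A] [CommRing B] [Algebra A B]
    [IsNoetherianRing A] [IsLocalRing A] [IsNoetherianRing B] [IsLocalRing B]
    (h : (maximalIdeal A).map (algebraMap A B) = maximalIdeal B) :
    ringKrullDim B ≤ ringKrullDim A := by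
  have : (maximalIdeal B).LiesOver (maximalIdeal A) :=
    ⟨(maximalIdeal.isMaximal A).eq_of_le (Ideal.comap_ne_top _ (maximalIdeal.isMaximal B).ne_top)
      (Ideal.map_le_iff_le_comap.1 h.le)⟩
  have hheight := Ideal.height_le_height_add_of_liesOver (maximalIdeal A) (maximalIdeal B)
  rw [h, Ideal.map_quotient_self, Ideal.height_bot, add_zero] at hheight
  rw [← maximalIdeal_height_eq_ringKrullDim, ← maximalIdeal_height_eq_ringKrullDim]
  exact_mod_cast hheight

lemma isRegularLocalRing_of_span_finset {S : Type*} [CommRing S] [IsNoetherianRing S]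
    [IsLocalRing S] {s : Finset S} (hs : maximalIdeal S = Ideal.span s)
    (hcard : s.card ≤ ringKrullDim S) : IsRegularLocalRing S := by
  refine .of_spanFinrank_maximalIdeal_le S (hcard.trans' ?_)
  rw [hs, ← Set.ncard_coe_finset]
  exact_mod_cast Submodule.spanFinrank_span_le_ncard_of_finite s.finite_toSet

variable {S : Type} [CommRing S] [IsRegularLocalRing S] {c : ℕ} {x : Fin c → S}

theorem evenOddDichotomy_extGroup_quotient_of_isRegular (hx : IsRegular S (List.ofFn x)) {d : ℕ}
    (hd : ringKrullDim (S ⧸ Ideal.span (Set.range x)) = d) (M N : Type) [AddCommGroup M]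
    [AddCommGroup N] [Module (S ⧸ Ideal.span (Set.range x)) M]
    [Module (S ⧸ Ideal.span (Set.range x)) N] [Module.Finite (S ⧸ Ideal.span (Set.range x)) M]
    [Module.Finite (S ⧸ Ideal.span (Set.range x)) N] :
    EvenOddDichotomy
      (fun i => Subsingleton (extGroup (S ⧸ Ideal.span (Set.range x)) M N i)) d := by
  let π := Ideal.Quotient.mk (Ideal.span (Set.range x))
  let : Module S M := .compHom M π
  let : Module S N := .compHom N π
  have : IsScalarTower S (S ⧸ Ideal.span (Set.range x)) M := .of_compHom S _ M
  have : IsScalarTower S (S ⧸ Ideal.span (Set.range x)) N := .of_compHom S _ N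
  have : Module.Finite S M := .trans (S ⧸ Ideal.span (Set.range x)) M
  have : Module.Finite S N := .trans (S ⧸ Ideal.span (Set.range x)) N
  have hdim : ringKrullDim S = (d + c : ℕ) := by
    have hspan : Ideal.ofList (List.ofFn x) = Ideal.span (Set.range x) := by
      simp only [Ideal.ofList, List.mem_ofFn, Set.range]
    have := ringKrullDim_add_length_eq_ringKrullDim_of_isRegular _ hx
    rw [hspan, hd, List.length_ofFn] at this
    exact_mod_cast this.symm
  exact evenOddDichotomy_extGroup_of_isWeaklyRegular hx.toIsWeaklyRegular rfl
    (hasProjectiveDimensionLE_of_isRegularLocalRing hdim M)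

theorem evenOddDichotomy_extGroup_of_adicCompletion {A : Type} [CommRing A] [IsNoetherianRing A]
    [IsLocalRing A]
    (e : AdicCompletion (maximalIdeal A) A ≃+* S ⧸ Ideal.span (Set.range x))
    (hx : IsRegular S (List.ofFn x)) {d : ℕ}
    (hd : ringKrullDim (AdicCompletion (maximalIdeal A) A) = d) (M N : Type)
    [AddCommGroup M] [Module A M] [Module.Finite A M]
    [AddCommGroup N] [Module A N] [Module.Finite A N] :
    EvenOddDichotomy (fun i => Subsingleton (extGroup A M N i)) d := by
  let B := S ⧸ Ideal.span (Set.range x)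
  let : Algebra A B := (e.toRingHom.comp (algebraMap A _)).toAlgebra
  let eA : AdicCompletion (maximalIdeal A) A ≃ₐ[A] B := .ofRingEquiv (f := e) fun _ => rfl
  have : Module.FaithfullyFlat A (AdicCompletion (maximalIdeal A) A) := .of_flat_of_isLocalHom
  have : Module.FaithfullyFlat A B := .of_linearEquiv A _ eA.toLinearEquiv.symm
  exact (evenOddDichotomy_extGroup_quotient_of_isRegular hx (ringKrullDim_eq_of_ringEquiv e ▸ hd)
    (B ⊗[A] M) (B ⊗[A] N)).congr (subsingleton_extGroup_baseChange_iff M N)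

end Completion

/-- Let `A` be a commutative Noetherian local ring which is a complete
intersection: there is a regular local ring `S` (a Noetherian local ring whose maximal
ideal is generated by `dim S` elements) and a regular sequence `x 1, …, x c` in the
maximal ideal of `S` such that the maximal-ideal-adic completion of `A` is isomorphic to
`S/(x 1, …, x c)`.  Let `M, N` be finitely generated `A`-modules.  Then either
`Ext_A^n(M,N) = 0` for all `n > dim A`, or there is `m₀ ≥ 0` such that
`Ext_A^n(M,N) ≠ 0` for all even `n ≥ m₀`, or for all odd `n ≥ m₀`. -/
theorem stmt_8 (A : Type) [CommRing A] [IsNoetherianRing A] [IsLocalRing A]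
    (S : Type) [CommRing S] [IsNoetherianRing S] [IsLocalRing S]
    (hreg : ∃ gen : Finset S, IsLocalRing.maximalIdeal S = Ideal.span ↑gen ∧
      (gen.card : WithBot (WithTop ℕ)) = ringKrullDim S)
    (c : ℕ) (x : Fin c → S)
    (hxm : ∀ i, x i ∈ IsLocalRing.maximalIdeal S)
    (hxreg : RingTheory.Sequence.IsRegular S (List.ofFn x))
    (hcompl : Nonempty
      ((AdicCompletion (IsLocalRing.maximalIdeal A) A) ≃+* S ⧸ Ideal.span (Set.range x)))
    (M N : Type) [AddCommGroup M] [Module A M] [Module.Finite A M]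
    [AddCommGroup N] [Module A N] [Module.Finite A N] :
    (∀ n : ℕ, ringKrullDim A < (n : WithBot (WithTop ℕ)) → Subsingleton (extGroup A M N n)) ∨
    ∃ m₀ : ℕ, (∀ n ≥ m₀, Even n → Nontrivial (extGroup A M N n)) ∨
      (∀ n ≥ m₀, Odd n → Nontrivial (extGroup A M N n)) := by
  obtain ⟨gen, hgen, hcard⟩ := hreg
  obtain ⟨e⟩ := hcompl
  have : IsRegularLocalRing S := isRegularLocalRing_of_span_finset hgen hcard.le
  have : IsNoetherianRing (AdicCompletion (IsLocalRing.maximalIdeal A) A) :=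
    isNoetherianRing_of_ringEquiv _ e.symm
  obtain ⟨d, hd⟩ : ∃ d : ℕ, ringKrullDim (AdicCompletion (IsLocalRing.maximalIdeal A) A) = d :=
    ⟨_, Order.krullDim_eq_length_of_finiteDimensionalOrder⟩
  have hdA : d ≤ ringKrullDim A :=
    hd ▸ ringKrullDim_le_of_map_maximalIdeal_eq AdicCompletion.maximalIdeal_eq_map.symm
  simp only [← not_subsingleton_iff_nontrivial]
  exact (evenOddDichotomy_extGroup_of_adicCompletion e hxreg hd M N).imp_left
    fun h n hn => h n (Nat.cast_lt.1 (WithBot.coe_lt_coe.1 (hdA.trans_lt hn)))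
end
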